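/- Let R be a commutative ring, I a splitting ideal of R, and n ≥ 4. Then there is a group isomorphism Θ : St*(n,R,I) → St(n,R,I) such that φ(Θ(F(u,v))) = t(u,v) and φ(Θ(S(u,v))) = t(u,v) for all generators, and Θ(F(e_i, e_j·s)) = x_{ij}(s) for all i ≠ j and s ∈ I. -/

import Mathlib

open scoped commutatorElement

/-- Generators of the Steinberg group: triples (i,j,r) with i ≠ j. -/
abbrev StGen (n : ℕ) (R : Type) : Type := {p : Fin n × Fin n // p.1 ≠ p.2} × R

/-- The Steinberg relations. -/
inductive StRels (n : ℕ) (R : Type) [CommRing R] : FreeGroup (StGen n R) → Prop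
  | add (i j : Fin n) (hij : i ≠ j) (r s : R) :
      StRels n R (FreeGroup.of (⟨(i, j), hij⟩, r) * FreeGroup.of (⟨(i, j), hij⟩, s) *
        (FreeGroup.of (⟨(i, j), hij⟩, r + s))⁻¹)
  | commZero (i j h k : Fin n) (hij : i ≠ j) (hhk : h ≠ k) (hjh : j ≠ h) (hik : i ≠ k) (r s : R) :
      StRels n R ⁅(FreeGroup.of (⟨(i, j), hij⟩, r) : FreeGroup (StGen n R)), FreeGroup.of (⟨(h, k), hhk⟩, s)⁆
  | commAdd (i j k : Fin n) (hij : i ≠ j) (hjk : j ≠ k) (hik : i ≠ k) (r s : R) :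
      StRels n R (⁅(FreeGroup.of (⟨(i, j), hij⟩, r) : FreeGroup (StGen n R)), FreeGroup.of (⟨(j, k), hjk⟩, s)⁆ *
        (FreeGroup.of (⟨(i, k), hik⟩, r * s))⁻¹)

/-- The Steinberg group `St(n, R)`. -/
abbrev SteinbergGroup (n : ℕ) (R : Type) [CommRing R] : Type :=
  PresentedGroup {w | StRels n R w}

/-- The generator `x_{ij}(r)` of the Steinberg group. -/
def stx (n : ℕ) (R : Type) [CommRing R] (i j : Fin n) (hij : i ≠ j) (r : R) :
    SteinbergGroup n R :=
  PresentedGroup.of (⟨(i, j), hij⟩, r)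

/-- The set of elementary transvections inside `GL n R`. -/
def transvectionSet (n : ℕ) (R : Type) [CommRing R] :
    Set (Matrix.GeneralLinearGroup (Fin n) R) :=
  {M | ∃ (i j : Fin n) (_ : i ≠ j) (r : R),
    (M : Matrix (Fin n) (Fin n) R) = 1 + Matrix.single i j r}

/-- The elementary subgroup `E(n, R) ≤ GL(n, R)`. -/
def Elem (n : ℕ) (R : Type) [CommRing R] : Subgroup (Matrix.GeneralLinearGroup (Fin n) R) :=
  Subgroup.closure (transvectionSet n R)

/-- The set `E(n,R)e₁` of first columns of elementary matrices. -/
def Ecol (n : ℕ) (R : Type) [CommRing R] [NeZero n] : Set (Fin n → R) :=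
  {u | ∃ M ∈ Elem n R, u = fun i => (M : Matrix (Fin n) (Fin n) R) i 0}

/-- The matrix `t(u, v) = 1 + u·vᵗ`. -/
def tMat {n : ℕ} {R : Type} [CommRing R] (u v : Fin n → R) : Matrix (Fin n) (Fin n) R :=
  1 + Matrix.vecMulVec u v

/-- The `k`-th column of an invertible matrix. -/
def colM {n : ℕ} {R : Type} [CommRing R] (M : Matrix.GeneralLinearGroup (Fin n) R)
    (k : Fin n) : Fin n → R :=
  fun i => (M : Matrix (Fin n) (Fin n) R) i k

/-- The `k`-th column of the contragredient matrix `M* = (Mᵗ)⁻¹ = (M⁻¹)ᵗ`. -/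
def starCol {n : ℕ} {R : Type} [CommRing R] (M : Matrix.GeneralLinearGroup (Fin n) R)
    (k : Fin n) : Fin n → R :=
  fun i => ((M⁻¹ : Matrix.GeneralLinearGroup (Fin n) R) : Matrix (Fin n) (Fin n) R) k i

/-- Unimodularity of the `n × 2` matrix with columns `u`, `w`: it admits a left inverse. -/
def Unimodular2 {n : ℕ} {R : Type} [CommRing R] (u w : Fin n → R) : Prop :=
  ∃ x y : Fin n → R,
    dotProduct x u = 1 ∧ dotProduct x w = 0 ∧
    dotProduct y u = 0 ∧ dotProduct y w = 1
/-- Generators `F(u,v)` and `S(u,v)` of the group `St*(n, R, I)`. -/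
inductive StarGen (n : ℕ) (R : Type) [CommRing R] [NeZero n] (I : Ideal R) : Type
  | F (u v : Fin n → R) (hu : u ∈ Ecol n R) (hv : ∀ i, v i ∈ I)
      (ho : dotProduct u v = 0) : StarGen n R I
  | S (u v : Fin n → R) (hu : ∀ i, u i ∈ I) (hv : v ∈ Ecol n R)
      (ho : dotProduct u v = 0) : StarGen n R I

/-- The relations (R1)–(R4) of the group `St*(n, R, I)`. -/
inductive StarRels (n : ℕ) (R : Type) [CommRing R] [NeZero n] (I : Ideal R) :
    FreeGroup (StarGen n R I) → Prop
  | addF (u v w : Fin n → R) (hu : u ∈ Ecol n R) (hv : ∀ i, v i ∈ I) (hw : ∀ i, w i ∈ I)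
      (hvw : ∀ i, (v + w) i ∈ I) (o1 : dotProduct u v = 0)
      (o2 : dotProduct u w = 0) (o3 : dotProduct u (v + w) = 0) :
      StarRels n R I ((FreeGroup.of (StarGen.F u v hu hv o1) : FreeGroup (StarGen n R I)) *
        FreeGroup.of (StarGen.F u w hu hw o2) * (FreeGroup.of (StarGen.F u (v + w) hu hvw o3))⁻¹)
  | addS (u w v : Fin n → R) (hu : ∀ i, u i ∈ I) (hw : ∀ i, w i ∈ I)
      (huw : ∀ i, (u + w) i ∈ I) (hv : v ∈ Ecol n R) (o1 : dotProduct u v = 0)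
      (o2 : dotProduct w v = 0) (o3 : dotProduct (u + w) v = 0) :
      StarRels n R I ((FreeGroup.of (StarGen.S u v hu hv o1) : FreeGroup (StarGen n R I)) *
        FreeGroup.of (StarGen.S w v hw hv o2) * (FreeGroup.of (StarGen.S (u + w) v huw hv o3))⁻¹)
  | conjF (u v u' v' : Fin n → R) (hu : u ∈ Ecol n R) (hv : ∀ i, v i ∈ I)
      (o1 : dotProduct u v = 0) (hu' : u' ∈ Ecol n R) (hv' : ∀ i, v' i ∈ I)
      (o2 : dotProduct u' v' = 0)
      (hu'' : Matrix.mulVec (tMat u v) u' ∈ Ecol n R)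
      (hv'' : ∀ i, Matrix.mulVec (1 - Matrix.vecMulVec v u) v' i ∈ I)
      (o3 : dotProduct (Matrix.mulVec (tMat u v) u')
        (Matrix.mulVec (1 - Matrix.vecMulVec v u) v') = 0) :
      StarRels n R I ((FreeGroup.of (StarGen.F u v hu hv o1) : FreeGroup (StarGen n R I)) *
        FreeGroup.of (StarGen.F u' v' hu' hv' o2) * (FreeGroup.of (StarGen.F u v hu hv o1))⁻¹ *
        (FreeGroup.of (StarGen.F (Matrix.mulVec (tMat u v) u')
          (Matrix.mulVec (1 - Matrix.vecMulVec v u) v') hu'' hv'' o3))⁻¹)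
  | coinc (M : Matrix.GeneralLinearGroup (Fin n) R) (hM : M ∈ Elem n R) (a : R) (ha : a ∈ I)
      (h1 : colM M 0 ∈ Ecol n R) (h2 : ∀ i, (a • starCol M 1) i ∈ I)
      (h3 : dotProduct (colM M 0) (a • starCol M 1) = 0)
      (h4 : ∀ i, (a • colM M 0) i ∈ I) (h5 : starCol M 1 ∈ Ecol n R)
      (h6 : dotProduct (a • colM M 0) (starCol M 1) = 0) :
      StarRels n R I ((FreeGroup.of (StarGen.F (colM M 0) (a • starCol M 1) h1 h2 h3) :
          FreeGroup (StarGen n R I)) *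
        (FreeGroup.of (StarGen.S (a • colM M 0) (starCol M 1) h4 h5 h6))⁻¹)

/-- The group `St*(n, R, I)`. -/
abbrev StStar (n : ℕ) (R : Type) [CommRing R] [NeZero n] (I : Ideal R) : Type :=
  PresentedGroup {w | StarRels n R I w}

/-!
For `u = M e₀` with `M ∈ E(n, R)` lifted to `g ∈ St(n, R)`, and `v` orthogonal to `u`, one wants
`X(u, v) = g (∏ₖ x_{0k}(wₖ)) g⁻¹` with `w = Mᵀ v`. It does not depend on `g`: conjugation by `g`
carries the lifts of the transvections `1 + u vᵀ`, `v` a Koszul syzygy of `u`, to those of `M u`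
(this uses a fourth index), and for `u = eᵢ` these lifts generate exactly the `i`-th row subgroup,
on which `St(n, R) → GL(n, R)` is injective. Hence `F(u, v) ↦ X(u, v)` defines
`θ : St*(n, R, I) → St(n, R)`.

Letting `St(n, R)` act on `St*(n, R, I)` through the indices of the generators makes `θ` a crossed
module; the Peiffer identity is relation (R3). A section `σ` of `R → R/I` then gives a homomorphism
`St(n, R) → St*(n, R, I) ⋊ St(n, R/I)`, `x_{ij}(r) ↦ (F(eᵢ, (r - σ r̄) eⱼ), x_{ij}(r̄))`. Composed
with `θ` it is the inclusion of the first factor, so `θ` is injective, and it splits each element of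
`St(n, R)` as a value of `θ` times an element from `St(n, R/I)`, so the range of `θ` is the kernel
of `St(n, R) → St(n, R/I)`.
-/

open MulAut
open scoped Matrix

@[elab_as_elim]
theorem vector_induction {ι M : Type*} [Finite ι] [DecidableEq ι] [AddCommMonoid M]
    {P : (ι → M) → Prop} (w : ι → M) (zero : P 0)
    (add : ∀ v v', (∀ i, w i = 0 → v i = 0) → (∀ i, w i = 0 → v' i = 0) → P v → P v' → P (v + v'))
    (single : ∀ k, P (Pi.single k (w k))) : P w := by
  have := Fintype.ofFinite ι
  suffices (∀ i, w i = 0 → (∑ k, Pi.single k (w k)) i = 0) ∧ P (∑ k, Pi.single k (w k)) by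
    simpa only [Finset.univ_sum_single] using this.2
  refine Finset.sum_induction (fun k => Pi.single k (w k))
    (fun v => (∀ i, w i = 0 → v i = 0) ∧ P v) ?_ ⟨fun _ _ => rfl, zero⟩ fun k _ => ⟨?_, single k⟩
  · rintro v v' ⟨hv, ihv⟩ ⟨hv', ihv'⟩
    exact ⟨fun i hi => by simp [hv i hi, hv' i hi], add v v' hv hv' ihv ihv'⟩
  · intro i hi
    rcases eq_or_ne i k with rfl | hik
    · simpa using hi
    · simp [hik]

section Commutators

variable {G : Type*} [Group G]

theorem conj_eq_of_commute {g h : G} (hgh : Commute g h) : conj g h = h := by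
  rw [conj_eq_commutatorElement_mul, hgh.commutator_eq, one_mul]

theorem commute_commutator {z a b : G} (ha : Commute z a) (hb : Commute z b) :
    Commute z ⁅a, b⁆ := by
  rw [commutatorElement_def]
  exact ((ha.mul_right hb).mul_right ha.inv_right).mul_right hb.inv_right

theorem commutator_mul_of_commute {z a b : G} (ha : Commute z a) (hab : Commute z ⁅a, b⁆) :
    ⁅a, z * b⁆ = ⁅a, b⁆ := by
  rw [commutatorElement_mul_right_eq_mul_conj, ha.symm.commutator_eq, one_mul, hab.eq,
    mul_inv_cancel_right]

/-- Compute `a (b d b⁻¹) a⁻¹` in two ways, using `b d b⁻¹ = ⁅b, d⁆ d` and `a b = ⁅a, b⁆ b a`. -/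
theorem commutator_commutator_assoc {a b d : G} (had : Commute a d) (hbdd : Commute ⁅b, d⁆ d)
    (habbd : Commute ⁅a, b⁆ ⁅b, d⁆) : ⁅a, ⁅b, d⁆⁆ = ⁅⁅a, b⁆, d⁆ := by
  have hfirst : conj a (conj b d) = conj a ⁅b, d⁆ * d := by
    rw [conj_eq_commutatorElement_mul (g₁ := b), map_mul, conj_eq_of_commute had]
  have hsecond : conj a (conj b d) = ⁅b, d⁆ * conj ⁅a, b⁆ d :=
    calc conj a (conj b d) = conj (⁅a, b⁆ * b) (conj a d) := by
          simp [commutatorElement_def, conj_apply, mul_assoc]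
      _ = conj ⁅a, b⁆ (⁅b, d⁆ * d) := by
          rw [conj_eq_of_commute had, map_mul, mul_apply, conj_eq_commutatorElement_mul (g₁ := b)]
      _ = ⁅b, d⁆ * conj ⁅a, b⁆ d := by rw [map_mul, conj_eq_of_commute habbd]
  have hconj : conj a ⁅b, d⁆ = ⁅b, d⁆ * ⁅⁅a, b⁆, d⁆ := by
    rw [commutatorElement_def ⁅a, b⁆ d, ← conj_apply, ← mul_assoc, eq_mul_inv_iff_mul_eq, ← hfirst,
      hsecond]
  rw [commutatorElement_def a, ← conj_apply, hconj,
    (commute_commutator habbd.symm hbdd).eq, mul_inv_cancel_right]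

end Commutators

/-! ### Elementary generators -/

namespace SteinbergGroup

section Basic

variable {n : ℕ} {R : Type} [CommRing R]

/-- The root element `x_{ij}(r)`, extended to `i = j` by the junk value `1` so that the indices can
vary freely. -/
def x (i j : Fin n) (r : R) : SteinbergGroup n R :=
  if h : i = j then 1 else stx n R i j h r

theorem x_of_ne {i j : Fin n} (h : i ≠ j) (r : R) : x i j r = stx n R i j h r := dif_neg h

@[simp]
theorem x_self (i : Fin n) (r : R) : x i i r = 1 := dif_pos rfl

theorem x_add (i j : Fin n) (r s : R) : x i j (r + s) = x i j r * x i j s := by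
  rcases eq_or_ne i j with rfl | h
  · simp
  · simp only [x_of_ne h]
    exact (mul_inv_eq_one.1 (PresentedGroup.one_of_mem (StRels.add i j h r s))).symm

@[simp]
theorem x_zero (i j : Fin n) : x i j (0 : R) = 1 := by
  simpa using x_add i j (0 : R) 0

theorem x_neg (i j : Fin n) (r : R) : x i j (-r) = (x i j r)⁻¹ :=
  eq_inv_of_mul_eq_one_left (by rw [← x_add, neg_add_cancel, x_zero])

theorem commute_x_x {i j k l : Fin n} (hjk : j ≠ k) (hil : i ≠ l) (r s : R) :
    Commute (x i j r) (x k l s) := by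
  rcases eq_or_ne i j with rfl | hij
  · simp
  rcases eq_or_ne k l with rfl | hkl
  · simp
  rw [← commutatorElement_eq_one_iff_commute, x_of_ne hij, x_of_ne hkl]
  exact PresentedGroup.one_of_mem (StRels.commZero i j k l hij hkl hjk hil r s)

theorem commutator_x_x {i j k : Fin n} (hij : i ≠ j) (hjk : j ≠ k) (hik : i ≠ k) (r s : R) :
    ⁅x i j r, x j k s⁆ = x i k (r * s) := by
  rw [x_of_ne hij, x_of_ne hjk, x_of_ne hik]
  exact mul_inv_eq_one.1 (PresentedGroup.one_of_mem (StRels.commAdd i j k hij hjk hik r s))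

theorem commute_x_x_left (i j k : Fin n) (r s : R) : Commute (x i j r) (x i k s) := by
  rcases eq_or_ne i j with rfl | hij
  · simp
  rcases eq_or_ne i k with rfl | hik
  · simp
  exact commute_x_x hij.symm hik r s

theorem conj_x_x_left {i j k : Fin n} (hij : i ≠ j) (hjk : j ≠ k) (hik : i ≠ k) (r s : R) :
    conj (x i j r) (x j k s) = x i k (r * s) * x j k s := by
  rw [conj_eq_commutatorElement_mul, commutator_x_x hij hjk hik]

theorem conj_x_x_right {i j k : Fin n} (hij : i ≠ j) (hjk : j ≠ k) (hik : i ≠ k) (r s : R) :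
    conj (x j k r) (x i j s) = x i j s * x i k (-r * s) := by
  rw [conj_eq_commutatorElement_mul, ← commutatorElement_inv, commutator_x_x hij hjk hik, ← x_neg,
    (commute_x_x_left i k j _ _).eq, neg_mul, mul_comm r]

@[elab_as_elim]
theorem induction_on {P : SteinbergGroup n R → Prop} (g : SteinbergGroup n R) (one : P 1)
    (mul : ∀ g h, P g → P h → P (g * h)) (x : ∀ i j, i ≠ j → ∀ r, P (x i j r)) : P g := by
  have hg : g ∈ Subgroup.closure (Set.range PresentedGroup.of) := by
    rw [PresentedGroup.closure_range_of]; trivial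
  refine Subgroup.closure_induction'' ?_ ?_ one (fun g h _ _ => mul g h) hg
  · rintro _ ⟨⟨⟨⟨i, j⟩, hij⟩, r⟩, rfl⟩
    have := x i j hij r
    rwa [x_of_ne hij] at this
  · rintro _ ⟨⟨⟨⟨i, j⟩, hij⟩, r⟩, rfl⟩
    have := x i j hij (-r)
    rwa [x_neg, x_of_ne hij] at this

theorem hom_ext {G : Type*} [Group G] {f f' : SteinbergGroup n R →* G}
    (h : ∀ i j, i ≠ j → ∀ r, f (x i j r) = f' (x i j r)) : f = f' := by
  refine PresentedGroup.ext ?_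
  rintro ⟨⟨⟨i, j⟩, hij⟩, r⟩
  have := h i j hij r
  rwa [x_of_ne hij] at this

/-- The universal property: a homomorphism out of `St(n, R)` is a family of elements satisfying the
Steinberg relations. -/
def lift {G : Type*} [Group G] (f : Fin n → Fin n → R → G)
    (map_add : ∀ i j, i ≠ j → ∀ r s, f i j (r + s) = f i j r * f i j s)
    (commute : ∀ i j k l, i ≠ j → k ≠ l → j ≠ k → i ≠ l → ∀ r s, Commute (f i j r) (f k l s))
    (commutator : ∀ i j k, i ≠ j → j ≠ k → i ≠ k → ∀ r s, ⁅f i j r, f j k s⁆ = f i k (r * s)) :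
    SteinbergGroup n R →* G :=
  PresentedGroup.toGroup (f := fun p => f p.1.1.1 p.1.1.2 p.2) <| by
    rintro _ (⟨i, j, hij, r, s⟩ | ⟨i, j, k, l, hij, hkl, hjk, hil, r, s⟩ |
      ⟨i, j, k, hij, hjk, hik, r, s⟩)
    · simp [map_add i j hij]
    · simpa [commutatorElement_eq_one_iff_commute] using commute i j k l hij hkl hjk hil r s
    · simp [commutator i j k hij hjk hik]

theorem lift_x {G : Type*} [Group G] {f : Fin n → Fin n → R → G} {map_add commute commutator}
    {i j : Fin n} (hij : i ≠ j) (r : R) :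
    lift f map_add commute commutator (x i j r) = f i j r := by
  rw [x_of_ne hij]
  exact PresentedGroup.toGroup.of _

/-- The map `St(n, R) → St(n, R')` induced by a ring homomorphism. -/
def map {R' : Type} [CommRing R'] (f : R →+* R') : SteinbergGroup n R →* SteinbergGroup n R' :=
  lift (fun i j r => x i j (f r))
    (fun i j _ r s => by rw [map_add, x_add])
    (fun i j k l _ _ hjk hil _ _ => commute_x_x hjk hil _ _)
    (fun i j k hij hjk hik r s => by rw [map_mul, commutator_x_x hij hjk hik])

theorem map_x {R' : Type} [CommRing R'] (f : R →+* R') (i j : Fin n) (r : R) :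
    map f (x i j r) = x i j (f r) := by
  rcases eq_or_ne i j with rfl | hij
  · simp
  · exact lift_x hij r

/-- The automorphism of `St(n, R)` lifting the contragredient `M ↦ (M⁻¹)ᵀ`. It exchanges the roles
of rows and columns. -/
def contragredient : SteinbergGroup n R →* SteinbergGroup n R :=
  lift (fun i j r => x j i (-r))
    (fun i j _ r s => by rw [neg_add, x_add])
    (fun i j k l _ _ hjk hil _ _ => commute_x_x hil hjk _ _)
    (fun i j k hij hjk hik r s => by
      rw [← commutatorElement_inv, commutator_x_x hjk.symm hij.symm hik.symm, neg_mul_neg,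
        ← x_neg, mul_comm])

theorem contragredient_x (i j : Fin n) (r : R) : contragredient (x i j r) = x j i (-r) := by
  rcases eq_or_ne i j with rfl | hij
  · simp
  · exact lift_x hij r

theorem contragredient_contragredient (g : SteinbergGroup n R) :
    contragredient (contragredient g) = g := by
  have : contragredient.comp contragredient = MonoidHom.id (SteinbergGroup n R) :=
    hom_ext fun i j _ r => by simp [contragredient_x]
  exact DFunLike.congr_fun this g

end Basic

/-! ### Rows and columns -/

section RowsAndColumns

variable {n : ℕ} {R : Type} [CommRing R]

/-- `x_{ij}` as a homomorphism from the additive group of `R`. -/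
def xHom (i j : Fin n) : Multiplicative R →* SteinbergGroup n R where
  toFun r := x i j r.toAdd
  map_one' := x_zero i j
  map_mul' r s := x_add i j r.toAdd s.toAdd

theorem commute_xHom (i : Fin n) :
    Pairwise fun k l => ∀ r s : Multiplicative R, Commute (xHom i k r) (xHom i l s) :=
  fun k l _ r s => commute_x_x_left i k l r.toAdd s.toAdd

/-- `∏_k x_{ik}(w_k)`, a lift of `1 + eᵢ wᵀ` if `w i = 0`. The entry `w i` is irrelevant. -/
def row (i : Fin n) (w : Fin n → R) : SteinbergGroup n R :=
  MonoidHom.noncommPiCoprod (fun k => xHom i k) (commute_xHom i)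
    (fun k => Multiplicative.ofAdd (w k))

/-- `∏_k x_{ki}(p_k)`, a lift of `1 + p eᵢᵀ` if `p i = 0`, obtained from a row by the
contragredient. The entry `p i` is irrelevant. -/
def col (i : Fin n) (p : Fin n → R) : SteinbergGroup n R :=
  contragredient (row i (-p))

theorem row_add (i : Fin n) (v w : Fin n → R) : row i (v + w) = row i v * row i w :=
  map_mul (MonoidHom.noncommPiCoprod _ _) _ _

@[simp]
theorem row_zero (i : Fin n) : row i (0 : Fin n → R) = 1 :=
  map_one (MonoidHom.noncommPiCoprod _ _)

theorem row_neg (i : Fin n) (w : Fin n → R) : row i (-w) = (row i w)⁻¹ :=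
  eq_inv_of_mul_eq_one_left (by rw [← row_add, neg_add_cancel, row_zero])

@[simp]
theorem row_single (i k : Fin n) (r : R) : row i (Pi.single k r) = x i k r := by
  have hsingle : (fun l => Multiplicative.ofAdd ((Pi.single k r : Fin n → R) l)) =
      Pi.mulSingle k (Multiplicative.ofAdd r) := by
    ext l
    rcases eq_or_ne l k with rfl | hlk
    · simp
    · simp [hlk]
  rw [row, hsingle, MonoidHom.noncommPiCoprod_mulSingle]
  rfl

theorem col_add (i : Fin n) (p q : Fin n → R) : col i (p + q) = col i p * col i q := by
  rw [col, neg_add, row_add, map_mul, col, col]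

@[simp]
theorem col_zero (i : Fin n) : col i (0 : Fin n → R) = 1 := by
  simp [col]

theorem col_neg (i : Fin n) (p : Fin n → R) : col i (-p) = (col i p)⁻¹ :=
  eq_inv_of_mul_eq_one_left (by rw [← col_add, neg_add_cancel, col_zero])

@[simp]
theorem col_single (i k : Fin n) (r : R) : col i (Pi.single k r) = x k i r := by
  rw [col, ← Pi.single_neg, row_single, contragredient_x, neg_neg]

theorem contragredient_conj (g h : SteinbergGroup n R) :
    contragredient (conj g h) = conj (contragredient g) (contragredient h) := by
  simp [conj_apply]

theorem conj_x_row {i a b : Fin n} (hia : i ≠ a) (hib : i ≠ b) (hab : a ≠ b) (r : R)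
    (w : Fin n → R) : conj (x a b r) (row i w) = row i (w + Pi.single b (-r * w a)) := by
  induction w using vector_induction with
  | zero => simp
  | add v w _ _ hv hw =>
    rw [row_add, map_mul, hv, hw, ← row_add, Pi.add_apply, mul_add, Pi.single_add,
      add_add_add_comm]
  | single k =>
    rcases eq_or_ne k a with rfl | hka
    · simpa [row_add] using conj_x_x_right hia hab hib r _
    · simpa [hka.symm] using conj_eq_of_commute (commute_x_x hib.symm hka.symm r _)

theorem commute_x_row_of_apply_eq_zero {i j k : Fin n} (hik : i ≠ k) {w : Fin n → R}
    (hw : w j = 0) (r : R) : Commute (x j k r) (row i w) := by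
  refine vector_induction w (by simp) (fun v w _ _ hv hw => ?_) fun l => ?_
  · rw [row_add]; exact hv.mul_right hw
  rcases eq_or_ne j l with rfl | hjl
  · simp [hw]
  · rw [row_single]; exact commute_x_x hik.symm hjl r _

theorem commute_x_row (i k : Fin n) (r : R) (w : Fin n → R) : Commute (x i k r) (row i w) := by
  induction w using vector_induction with
  | zero => simp
  | add v w _ _ hv hw => rw [row_add]; exact hv.mul_right hw
  | single l => rw [row_single]; exact commute_x_x_left i k l r _

theorem commute_row_row {i j : Fin n} {v w : Fin n → R} (hv : v j = 0) (hw : w i = 0) :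
    Commute (row i v) (row j w) := by
  refine vector_induction w (by simp) (fun w w' _ _ hw hw' => ?_) fun k => ?_
  · rw [row_add]; exact hw.mul_right hw'
  rcases eq_or_ne i k with rfl | hik
  · simp [hw]
  · rw [row_single]; exact (commute_x_row_of_apply_eq_zero hik hv (w k)).symm

theorem conj_x_row_eq_mul {i j : Fin n} (hij : i ≠ j) (r : R) {w : Fin n → R} (hwi : w i = 0)
    (hwj : w j = 0) : conj (x i j r) (row j w) = row i (r • w) * row j w := by
  refine vector_induction w (by simp) (fun v w' hv hw' ihv ihw' => ?_) fun k => ?_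
  · have hcomm : Commute (row j v) (row i (r • w')) :=
      commute_row_row (hv i hwi) (by simp [hw' j hwj])
    rw [row_add, map_mul, ihv, ihw', smul_add, row_add, mul_assoc, mul_assoc,
      ← mul_assoc (row j v), hcomm.eq, mul_assoc]
  rcases eq_or_ne k i with rfl | hki
  · simp [hwi]
  rcases eq_or_ne k j with rfl | hkj
  · simp [hwj]
  · simpa [← Pi.single_smul] using conj_x_x_left hij hkj.symm hki.symm r (w k)

theorem commutator_x_row {i j : Fin n} (hij : i ≠ j) (r : R) {w : Fin n → R} (hwi : w i = 0)
    (hwj : w j = 0) : ⁅x i j r, row j w⁆ = row i (r • w) := by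
  rw [← mul_left_inj (row j w), ← conj_eq_commutatorElement_mul, conj_x_row_eq_mul hij r hwi hwj]

theorem conj_x_col {i a b : Fin n} (hia : i ≠ a) (hib : i ≠ b) (hab : a ≠ b) (r : R)
    (p : Fin n → R) : conj (x a b r) (col i p) = col i (p + Pi.single a (r * p b)) := by
  have := congrArg contragredient (conj_x_row hib hia hab.symm (-r) (-p))
  rw [contragredient_conj, contragredient_x, neg_neg] at this
  rw [col, this, col, neg_add, ← Pi.single_neg, Pi.neg_apply, mul_neg]

theorem commute_x_col (i k : Fin n) (r : R) (p : Fin n → R) : Commute (x k i r) (col i p) := by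
  simpa [col, contragredient_x] using
    (commute_x_row i k (-r) (-p)).map (contragredient : SteinbergGroup n R →* _)

theorem commutator_col_x {i j : Fin n} (hij : i ≠ j) (r : R) {p : Fin n → R} (hpi : p i = 0)
    (hpj : p j = 0) : ⁅col i p, x i j r⁆ = col j (r • p) := by
  have hinv : ⁅x i j r, col i p⁆ = col j (-(r • p)) := by
    simpa [col, map_commutatorElement, contragredient_x] using congrArg contragredient
      (commutator_x_row hij.symm (-r) (w := -p) (by simp [hpj]) (by simp [hpi]))
  rw [← commutatorElement_inv, hinv, ← col_neg, neg_neg]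

theorem conj_row_col {i j : Fin n} (hij : i ≠ j) {w : Fin n → R} (hwi : w i = 0) (hwj : w j = 0)
    (p : Fin n → R) : conj (row j w) (col i p) = col i (p + Pi.single j (w ⬝ᵥ p)) := by
  revert p
  refine vector_induction w (by simp) (fun v w' hv _ ihv ihw' p => ?_) fun k p => ?_
  · rw [row_add, map_mul, mul_apply, ihw', ihv, dotProduct_add, dotProduct_single, hv j hwj,
      zero_mul, add_zero, add_dotProduct, add_comm (v ⬝ᵥ p), Pi.single_add, add_assoc]
  rcases eq_or_ne k i with rfl | hki
  · simp [hwi]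
  rcases eq_or_ne k j with rfl | hkj
  · simp [hwj]
  · simpa using conj_x_col hij hki.symm hkj.symm (w k) p

theorem commute_col_row {i j : Fin n} (hij : i ≠ j) {p w : Fin n → R} (hwi : w i = 0)
    (hwj : w j = 0) (hpw : p ⬝ᵥ w = 0) : Commute (col i p) (row j w) := by
  have := conj_row_col hij hwi hwj p
  rw [dotProduct_comm, hpw, Pi.single_zero, add_zero, conj_apply, mul_inv_eq_iff_eq_mul] at this
  exact this.symm

end RowsAndColumns

/-! ### Transvections built from rows and columns -/

section TransvectionAt

variable {n : ℕ} {R : Type} [CommRing R]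

/-- If `w i = 0` and `u ⬝ᵥ w = 0`, this is a lift of the transvection `1 + u wᵀ`, built from the
`i`-th column and the `i`-th row. -/
def transvectionAt (i : Fin n) (u w : Fin n → R) : SteinbergGroup n R :=
  ⁅col i u, row i w⁆ * row i (u i • w)

@[simp]
theorem transvectionAt_zero (i : Fin n) (u : Fin n → R) : transvectionAt i u 0 = 1 := by
  simp [transvectionAt]

theorem conj_x_transvectionAt {i a b : Fin n} (hia : i ≠ a) (hib : i ≠ b) (hab : a ≠ b) (r : R)
    (u w : Fin n → R) :
    conj (x a b r) (transvectionAt i u w) =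
      transvectionAt i (u + Pi.single a (r * u b)) (w + Pi.single b (-r * w a)) := by
  have hsmul : u i • w + Pi.single b (-r * (u i • w) a) =
      u i • (w + Pi.single b (-r * w a)) := by
    rw [smul_add, ← Pi.single_smul, Pi.smul_apply, smul_eq_mul, smul_eq_mul, mul_left_comm]
  rw [transvectionAt, map_mul, map_commutatorElement, conj_x_col hia hib hab,
    conj_x_row hia hib hab, conj_x_row hia hib hab, hsmul, transvectionAt, Pi.add_apply,
    Pi.single_eq_of_ne hia, add_zero]

theorem commutator_col_row_eq {i j : Fin n} (hij : i ≠ j) {p w : Fin n → R} (hpi : p i = 0)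
    (hpj : p j = 0) (hwi : w i = 0) (hwj : w j = 0) (hpw : p ⬝ᵥ w = 0) :
    ⁅col i p, row i w⁆ = ⁅col j p, row j w⁆ := by
  have hrow : ⁅x i j (1 : R), row j w⁆ = row i w := by
    rw [commutator_x_row hij 1 hwi hwj, one_smul]
  have hcol : ⁅col i p, x i j (1 : R)⁆ = col j p := by
    rw [commutator_col_x hij 1 hpi hpj, one_smul]
  rw [← hrow, ← hcol]
  refine commutator_commutator_assoc (commute_col_row hij hwi hwj hpw) ?_ ?_
  · rw [hrow]; exact commute_row_row hwj hwi
  · rw [hrow, hcol]; exact commute_col_row hij.symm hwj hwi hpw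

theorem commute_row_commutator_col_row {i j : Fin n} (hij : i ≠ j) {p w : Fin n → R}
    (hwi : w i = 0) (hwj : w j = 0) (hpw : p ⬝ᵥ w = 0) (t : R) :
    Commute (row j (t • w)) ⁅col i p, row i w⁆ :=
  commute_commutator
    (commute_col_row hij (by simp [hwi]) (by simp [hwj]) (by simp [hpw])).symm
    (commute_row_row (by simp [hwi]) hwj)

/-- The decomposition of a transvection along two indices `i, j` outside the support of `w`: here
`p` is `u` with its `i`-th and `j`-th entries removed. -/
theorem transvectionAt_add_single_add_single {i j : Fin n} (hij : i ≠ j) {p w : Fin n → R}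
    (hpi : p i = 0) (hwi : w i = 0) (hwj : w j = 0) (hpw : p ⬝ᵥ w = 0) (a b : R) :
    transvectionAt i (p + Pi.single i a + Pi.single j b) w =
      ⁅col i p, row i w⁆ * row i (a • w) * row j (b • w) := by
  have hcol : col i (p + Pi.single i a + Pi.single j b) = col i p * x j i b := by
    simp [col_add]
  have hcomm : ⁅col i p * x j i b, row i w⁆ = row j (b • w) * ⁅col i p, row i w⁆ := by
    have hpj : conj (col i p) (row j (b • w)) = row j (b • w) :=
      conj_eq_of_commute (commute_col_row hij (by simp [hwi]) (by simp [hwj]) (by simp [hpw]))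
    rw [commutatorElement_def, ← conj_apply, map_mul, mul_apply,
      conj_x_row_eq_mul hij.symm b hwj hwi, map_mul, hpj, commutatorElement_def, ← conj_apply,
      mul_assoc]
  have hi : (p + Pi.single i a + Pi.single j b : Fin n → R) i = a := by simp [hpi, hij]
  have hrow : Commute (row j (b • w)) (row i (a • w)) :=
    commute_row_row (by simp [hwi]) (by simp [hwj])
  rw [transvectionAt, hi, hcol, hcomm,
    (commute_row_commutator_col_row hij hwi hwj hpw b).eq, mul_assoc, hrow.eq, mul_assoc]

theorem exists_eq_add_single_add_single {i j : Fin n} (hij : i ≠ j) (u : Fin n → R) :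
    ∃ (p : Fin n → R) (a b : R), p i = 0 ∧ p j = 0 ∧ u = p + Pi.single i a + Pi.single j b := by
  refine ⟨u - Pi.single i (u i) - Pi.single j (u j), u i, u j, ?_, ?_, by abel⟩
  · simp [hij]
  · simp [hij.symm]

theorem transvectionAt_congr_index {i j : Fin n} {u w : Fin n → R} (hwi : w i = 0)
    (hwj : w j = 0) (huw : u ⬝ᵥ w = 0) : transvectionAt i u w = transvectionAt j u w := by
  rcases eq_or_ne i j with rfl | hij
  · rfl
  obtain ⟨p, a, b, hpi, hpj, rfl⟩ := exists_eq_add_single_add_single hij u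
  have hpw : p ⬝ᵥ w = 0 := by simpa [hwi, hwj] using huw
  have hrow : Commute (row i (a • w)) (row j (b • w)) :=
    commute_row_row (by simp [hwj]) (by simp [hwi])
  rw [transvectionAt_add_single_add_single hij hpi hwi hwj hpw, add_right_comm,
    transvectionAt_add_single_add_single hij.symm hpj hwj hwi hpw,
    commutator_col_row_eq hij hpi hpj hwi hwj hpw, mul_assoc, hrow.eq, mul_assoc]

theorem conj_x_transvectionAt_self {i j : Fin n} (hij : i ≠ j) {u w : Fin n → R} (hwi : w i = 0)
    (hwj : w j = 0) (huw : u ⬝ᵥ w = 0) (r : R) :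
    conj (x j i r) (transvectionAt i u w) = transvectionAt i (u + Pi.single j (r * u i)) w := by
  obtain ⟨p, a, b, hpi, -, rfl⟩ := exists_eq_add_single_add_single hij u
  have hpw : p ⬝ᵥ w = 0 := by simpa [hwi, hwj] using huw
  have hcomm : conj (x j i r) ⁅col i p, row i w⁆ = ⁅col i p, row i w⁆ := by
    rw [map_commutatorElement, conj_eq_of_commute (commute_x_col i j r p),
      conj_x_row_eq_mul hij.symm r hwj hwi]
    exact commutator_mul_of_commute
      (commute_col_row hij (by simp [hwi]) (by simp [hwj]) (by simp [hpw])).symm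
      (commute_row_commutator_col_row hij hwi hwj hpw r)
  have hrow : conj (x j i r) (row i (a • w)) = row i (a • w) * row j ((r * a) • w) := by
    rw [conj_x_row_eq_mul hij.symm r (by simp [hwj]) (by simp [hwi]), smul_smul]
    exact commute_row_row (by simp [hwi]) (by simp [hwj])
  have hu : p + Pi.single i a + Pi.single j b + Pi.single j (r * a) =
      p + Pi.single i a + Pi.single j (r * a + b) := by
    rw [add_assoc, ← Pi.single_add, add_comm b]
  have hi : (p + Pi.single i a + Pi.single j b : Fin n → R) i = a := by simp [hpi, hij]
  rw [hi, hu, transvectionAt_add_single_add_single hij hpi hwi hwj hpw,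
    transvectionAt_add_single_add_single hij hpi hwi hwj hpw, map_mul, map_mul, hcomm, hrow,
    conj_eq_of_commute (commute_x_row j i r _), add_smul, row_add]
  simp only [mul_assoc]

theorem conj_x_transvectionAt_of_apply_eq_zero {i k m : Fin n} (him : i ≠ m) (hik : i ≠ k)
    {u w : Fin n → R} (hwi : w i = 0) (hwk : w k = 0) (huw : u ⬝ᵥ w = 0) (r : R) :
    conj (x i m r) (transvectionAt k u w) = transvectionAt k (u + Pi.single i (r * u m)) w := by
  rcases eq_or_ne k m with rfl | hkm
  · exact conj_x_transvectionAt_self hik.symm hwk hwi huw r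
  · rw [conj_x_transvectionAt hik.symm hkm him, hwi, mul_zero, Pi.single_zero, add_zero]

theorem conj_row_transvectionAt {i k : Fin n} (hik : i ≠ k) {v w : Fin n → R} (hvi : v i = 0)
    (hwi : w i = 0) (hwk : w k = 0) (u : Fin n → R) (huw : u ⬝ᵥ w = 0) :
    conj (row i v) (transvectionAt k u w) = transvectionAt k (u + Pi.single i (v ⬝ᵥ u)) w := by
  revert u
  refine vector_induction v (by simp) (fun v v' hv _ ihv ihv' u huw => ?_) fun m u huw => ?_
  · rw [row_add, map_mul, mul_apply, ihv' u huw, ihv _ (by simp [huw, hwi]), dotProduct_add,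
      dotProduct_single, hv i hvi, zero_mul, add_zero, add_dotProduct, add_comm (v ⬝ᵥ u),
      Pi.single_add, add_assoc]
  rcases eq_or_ne i m with rfl | him
  · simp [hvi]
  · rw [row_single, single_dotProduct]
    exact conj_x_transvectionAt_of_apply_eq_zero him hik hwi hwk huw (v m)

theorem commute_row_transvectionAt {i k : Fin n} (hik : i ≠ k) {u v w : Fin n → R} (hvi : v i = 0)
    (hwi : w i = 0) (hwk : w k = 0) (huv : u ⬝ᵥ v = 0) (huw : u ⬝ᵥ w = 0) :
    Commute (row i v) (transvectionAt i u w) := by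
  have hconj := conj_row_transvectionAt hik hvi hwi hwk u huw
  rw [dotProduct_comm, huv, Pi.single_zero, add_zero, ← transvectionAt_congr_index hwi hwk huw,
    conj_apply, mul_inv_eq_iff_eq_mul] at hconj
  exact hconj

theorem transvectionAt_add {i k : Fin n} (hik : i ≠ k) {u v w : Fin n → R} (hvi : v i = 0)
    (hwi : w i = 0) (hwk : w k = 0) (huv : u ⬝ᵥ v = 0) (huw : u ⬝ᵥ w = 0) :
    transvectionAt i u (v + w) = transvectionAt i u v * transvectionAt i u w := by
  have hv := commute_row_transvectionAt hik hvi hwi hwk huv huw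
  have huiv := commute_row_transvectionAt hik (v := u i • v) (by simp [hvi]) hwi hwk
    (by simp [huv]) huw
  calc transvectionAt i u (v + w)
      = ⁅col i u, row i v⁆ * conj (row i v) (transvectionAt i u w) * row i (u i • v) := by
        have hrow : conj (row i v) (row i (u i • w)) = row i (u i • w) :=
          conj_eq_of_commute (commute_row_row hvi (by simp [hwi]))
        rw [transvectionAt, transvectionAt, map_mul, hrow, smul_add, add_comm (u i • v), row_add,
          row_add, commutatorElement_mul_right_eq_mul_conj, conj_apply]
        simp only [mul_assoc]
    _ = transvectionAt i u v * transvectionAt i u w := by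
        rw [conj_eq_of_commute hv, mul_assoc, ← huiv.eq, ← mul_assoc]
        rfl

end TransvectionAt

/-! ### The map to `GL(n, R)` -/

section ToMatrix

variable {n : ℕ} {R : Type} [CommRing R]

/-- The elementary matrix `1 + r e_{ij}`, with the junk value `1` if `i = j`. -/
def elementaryGL (i j : Fin n) (r : R) : Matrix.GeneralLinearGroup (Fin n) R :=
  if h : i = j then 1 else
    Matrix.SpecialLinearGroup.toGL (Matrix.SpecialLinearGroup.transvection h r)

theorem coe_elementaryGL {i j : Fin n} (hij : i ≠ j) (r : R) :
    (elementaryGL i j r : Matrix (Fin n) (Fin n) R) = 1 + Matrix.single i j r := by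
  rw [elementaryGL, dif_neg hij]
  rfl

/-- The canonical homomorphism `St(n, R) → GL(n, R)`. -/
def toGL : SteinbergGroup n R →* Matrix.GeneralLinearGroup (Fin n) R :=
  lift elementaryGL
    (fun i j hij r s => by
      ext1
      simp [coe_elementaryGL hij, mul_add, add_mul, hij.symm, Matrix.single_add, add_assoc])
    (fun i j k l hij hkl hjk hil r s => by
      ext1
      simp [coe_elementaryGL hij, coe_elementaryGL hkl, mul_add, add_mul, hjk, hil.symm,
        add_left_comm, add_comm])
    (fun i j k hij hjk hik r s => by
      rw [commutatorElement_def, mul_inv_eq_iff_eq_mul, mul_inv_eq_iff_eq_mul]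
      ext1
      simp [coe_elementaryGL hij, coe_elementaryGL hjk, coe_elementaryGL hik, mul_add, add_mul,
        hjk.symm, hik.symm, add_assoc, add_left_comm, add_comm])

theorem toGL_x {i j : Fin n} (hij : i ≠ j) (r : R) : toGL (x i j r) = elementaryGL i j r :=
  lift_x hij r

/-- The matrix of the image of an element of `St(n, R)` in `GL(n, R)`. -/
def toMatrix : SteinbergGroup n R →* Matrix (Fin n) (Fin n) R :=
  (Units.coeHom _).comp toGL

theorem toMatrix_x {i j : Fin n} (hij : i ≠ j) (r : R) :
    toMatrix (x i j r) = 1 + Matrix.single i j r := by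
  rw [toMatrix, MonoidHom.comp_apply, toGL_x hij]
  exact coe_elementaryGL hij r

theorem toMatrix_x_mulVec {i j : Fin n} (hij : i ≠ j) (r : R) (u : Fin n → R) :
    toMatrix (x i j r) *ᵥ u = u + Pi.single i (r * u j) := by
  rw [toMatrix_x hij, Matrix.add_mulVec, Matrix.one_mulVec, Matrix.single_mulVec]
  rfl

theorem toMatrix_mul_mulVec (g h : SteinbergGroup n R) (u : Fin n → R) :
    toMatrix (g * h) *ᵥ u = toMatrix g *ᵥ toMatrix h *ᵥ u := by
  rw [map_mul, Matrix.mulVec_mulVec]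

theorem toMatrix_inv_mulVec_mulVec (g : SteinbergGroup n R) (u : Fin n → R) :
    toMatrix g⁻¹ *ᵥ toMatrix g *ᵥ u = u := by
  rw [← toMatrix_mul_mulVec, inv_mul_cancel, map_one, Matrix.one_mulVec]

theorem toMatrix_mulVec_inv_mulVec (g : SteinbergGroup n R) (u : Fin n → R) :
    toMatrix g *ᵥ toMatrix g⁻¹ *ᵥ u = u := by
  simpa using toMatrix_inv_mulVec_mulVec g⁻¹ u

theorem toMatrix_contragredient (g : SteinbergGroup n R) :
    toMatrix (contragredient g) = (toMatrix g⁻¹)ᵀ := by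
  induction g using induction_on with
  | one => simp
  | mul g h hg hh => rw [map_mul, map_mul, hg, hh, mul_inv_rev, map_mul, Matrix.transpose_mul]
  | x i j hij r =>
    rw [contragredient_x, ← x_neg, toMatrix_x hij, toMatrix_x hij.symm, Matrix.transpose_add,
      Matrix.transpose_one, Matrix.transpose_single]

theorem dotProduct_toMatrix_contragredient (g : SteinbergGroup n R) (u v : Fin n → R) :
    toMatrix g *ᵥ u ⬝ᵥ toMatrix (contragredient g) *ᵥ v = u ⬝ᵥ v := by
  rw [toMatrix_contragredient, Matrix.mulVec_transpose, dotProduct_comm, ← Matrix.dotProduct_mulVec,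
    toMatrix_inv_mulVec_mulVec, dotProduct_comm]

theorem toMatrix_row {i : Fin n} {w : Fin n → R} (hw : w i = 0) :
    toMatrix (row i w) = tMat (Pi.single i 1) w := by
  refine vector_induction w (by simp [tMat]) (fun v v' hv _ ihv ihv' => ?_) fun k => ?_
  · rw [row_add, map_mul, ihv, ihv', tMat, tMat, tMat, Matrix.vecMulVec_add, add_mul, one_mul,
      mul_add, mul_one, Matrix.vecMulVec_mul_vecMulVec]
    simp [hv i hw, add_left_comm, add_comm]
  · rcases eq_or_ne i k with rfl | hik
    · simp [hw, tMat]
    · rw [row_single, toMatrix_x hik, tMat]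
      congr 1
      ext a b
      simp [Matrix.single_apply, Matrix.vecMulVec_apply, Pi.single_apply, ← ite_and, and_comm,
        eq_comm]

theorem toMatrix_conj_row (g : SteinbergGroup n R) {i : Fin n} {w : Fin n → R} (hw : w i = 0) :
    toMatrix (conj g (row i w)) =
      tMat (toMatrix g *ᵥ Pi.single i 1) (toMatrix (contragredient g) *ᵥ w) := by
  rw [conj_apply, map_mul, map_mul, toMatrix_row hw, tMat, tMat, toMatrix_contragredient,
    Matrix.mulVec_transpose, mul_add, add_mul, mul_one, Matrix.mul_vecMulVec, Matrix.vecMulVec_mul,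
    ← map_mul, mul_inv_cancel, map_one]

theorem tMat_mulVec (u v w : Fin n → R) : tMat u v *ᵥ w = w + (v ⬝ᵥ w) • u := by
  rw [tMat, Matrix.add_mulVec, Matrix.one_mulVec, Matrix.vecMulVec_mulVec, op_smul_eq_smul]

theorem tMat_mul_tMat_neg {u v : Fin n → R} (huv : u ⬝ᵥ v = 0) :
    tMat u v * tMat u (-v) = 1 := by
  rw [tMat, tMat, add_mul, one_mul, mul_add, mul_one, Matrix.vecMulVec_mul_vecMulVec,
    dotProduct_comm v u, huv]
  simp [Matrix.vecMulVec_neg]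

theorem toMatrix_contragredient_of_toMatrix_eq_tMat {g : SteinbergGroup n R} {u v : Fin n → R}
    (huv : u ⬝ᵥ v = 0) (hg : toMatrix g = tMat u v) :
    toMatrix (contragredient g) = tMat (-v) u := by
  have hinv : toMatrix g⁻¹ = tMat u (-v) :=
    left_inv_eq_right_inv (by rw [← map_mul, inv_mul_cancel, map_one])
      (by rw [hg, tMat_mul_tMat_neg huv])
  rw [toMatrix_contragredient, hinv, tMat, tMat, Matrix.transpose_add, Matrix.transpose_one,
    Matrix.transpose_vecMulVec]

theorem one_sub_vecMulVec (u v : Fin n → R) : 1 - Matrix.vecMulVec v u = tMat (-v) u := by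
  rw [tMat, Matrix.neg_vecMulVec, sub_eq_add_neg]

theorem smul_colM_toGL (a : R) (g : SteinbergGroup n R) (i : Fin n) :
    a • colM (toGL g) i = toMatrix g *ᵥ Pi.single i a := by
  rw [Matrix.mulVec_single, op_smul_eq_smul]
  rfl

theorem smul_starCol_toGL (a : R) (g : SteinbergGroup n R) (i : Fin n) :
    a • starCol (toGL g) i = toMatrix (contragredient g) *ᵥ Pi.single i a := by
  rw [Matrix.mulVec_single, op_smul_eq_smul, toMatrix_contragredient, toMatrix,
    MonoidHom.comp_apply, map_inv]
  rfl

theorem colM_toGL (g : SteinbergGroup n R) (i : Fin n) :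
    colM (toGL g) i = toMatrix g *ᵥ Pi.single i 1 := by
  rw [← smul_colM_toGL, one_smul]

theorem starCol_toGL (g : SteinbergGroup n R) (i : Fin n) :
    starCol (toGL g) i = toMatrix (contragredient g) *ᵥ Pi.single i 1 := by
  rw [← smul_starCol_toGL, one_smul]

end ToMatrix

/-! ### Koszul syzygies and independence of choices -/

section Koszul

variable {n : ℕ} {R : Type} [CommRing R]

/-- The Koszul syzygy `c (u_k e_l - u_l e_k)`, an obvious vector orthogonal to `u`. -/
def koszul (u : Fin n → R) (k l : Fin n) (c : R) : Fin n → R :=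
  Pi.single l (c * u k) - Pi.single k (c * u l)

theorem dotProduct_koszul (u : Fin n → R) (k l : Fin n) (c : R) : u ⬝ᵥ koszul u k l c = 0 := by
  rw [koszul, dotProduct_sub, dotProduct_single, dotProduct_single]
  ring

theorem koszul_apply_of_ne {i k l : Fin n} (hik : i ≠ k) (hil : i ≠ l) (u : Fin n → R) (c : R) :
    koszul u k l c i = 0 := by
  simp [koszul, hik, hil]

@[simp]
theorem koszul_self (u : Fin n → R) (k : Fin n) (c : R) : koszul u k k c = 0 := sub_self _

theorem koszul_swap (u : Fin n → R) (k l : Fin n) (c : R) :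
    koszul u k l c = koszul u l k (-c) := by
  simp only [koszul, neg_mul, Pi.single_neg]
  abel

theorem koszul_single {k l : Fin n} (hkl : k ≠ l) (c : R) :
    koszul (Pi.single k 1) k l c = Pi.single l c := by
  simp [koszul, hkl.symm]

theorem koszul_single_of_ne {k l m : Fin n} (hkm : k ≠ m) (hlm : l ≠ m) (c : R) :
    koszul (Pi.single m 1) k l c = 0 := by
  simp [koszul, hkm, hlm]

theorem koszul_add_single_of_ne {a k l : Fin n} (hak : a ≠ k) (hal : a ≠ l) (u : Fin n → R)
    (t c : R) : koszul (u + Pi.single a t) k l c = koszul u k l c := by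
  simp [koszul, hak.symm, hal.symm]

theorem koszul_add_single {a b l : Fin n} (hab : a ≠ b) (hal : a ≠ l) (u : Fin n → R) (r c : R) :
    koszul u a l c + Pi.single b (-r * koszul u a l c a) =
      koszul (u + Pi.single a (r * u b)) a l c +
        koszul (u + Pi.single a (r * u b)) b l (-(r * c)) := by
  ext m
  simp only [koszul, Pi.add_apply, Pi.sub_apply, Pi.single_apply, hab.symm, hal.symm, hal,
    if_true, if_false]
  split_ifs <;> ring

/-- The subgroup of lifts of transvections `1 + u vᵀ` with `v` a combination of Koszul syzygies.
Unlike single lifts, it visibly depends on `u` only. -/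
def koszulSubgroup (u : Fin n → R) : Subgroup (SteinbergGroup n R) :=
  Subgroup.closure
    {g | ∃ (i k l : Fin n) (c : R), i ≠ k ∧ i ≠ l ∧ g = transvectionAt i u (koszul u k l c)}

theorem transvectionAt_koszul_mem {i k l : Fin n} (hik : i ≠ k) (hil : i ≠ l) (u : Fin n → R)
    (c : R) : transvectionAt i u (koszul u k l c) ∈ koszulSubgroup u :=
  Subgroup.subset_closure ⟨i, k, l, c, hik, hil, rfl⟩

theorem exists_ne_ne_ne (hn : 4 ≤ n) (a b c : Fin n) : ∃ i, i ≠ a ∧ i ≠ b ∧ i ≠ c := by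
  have hcard : ({a, b, c} : Finset (Fin n)).card < (Finset.univ : Finset (Fin n)).card := by
    rw [Finset.card_univ, Fintype.card_fin]
    exact Finset.card_le_three.trans_lt hn
  obtain ⟨i, -, hi⟩ := Finset.exists_mem_notMem_of_card_lt_card hcard
  exact ⟨i, by simpa using hi⟩

theorem exists_ne_ne (hn : 3 ≤ n) (a b : Fin n) : ∃ i, i ≠ a ∧ i ≠ b := by
  have hcard : ({a, b} : Finset (Fin n)).card < (Finset.univ : Finset (Fin n)).card := by
    rw [Finset.card_univ, Fintype.card_fin]
    exact Finset.card_le_two.trans_lt hn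
  obtain ⟨i, -, hi⟩ := Finset.exists_mem_notMem_of_card_lt_card hcard
  exact ⟨i, by simpa using hi⟩

theorem conj_x_transvectionAt_koszul_mem_of_left (hn : 4 ≤ n) {a b i l : Fin n} (hab : a ≠ b)
    (hia : i ≠ a) (hil : i ≠ l) (r : R) (u : Fin n → R) (c : R) :
    conj (x a b r) (transvectionAt i u (koszul u a l c)) ∈
      koszulSubgroup (u + Pi.single a (r * u b)) := by
  rcases eq_or_ne a l with rfl | hal
  · simp [one_mem]
  obtain ⟨j, hja, hjl, hjb⟩ := exists_ne_ne_ne hn a l b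
  rw [transvectionAt_congr_index (koszul_apply_of_ne hia hil u c) (koszul_apply_of_ne hja hjl u c)
      (dotProduct_koszul u a l c), conj_x_transvectionAt hja hjb hab, koszul_add_single hab hal,
    transvectionAt_add hja (koszul_apply_of_ne hja hjl _ _) (koszul_apply_of_ne hjb hjl _ _)
      (koszul_apply_of_ne hab hal _ _) (dotProduct_koszul _ _ _ _) (dotProduct_koszul _ _ _ _)]
  exact mul_mem (transvectionAt_koszul_mem hja hjl _ _) (transvectionAt_koszul_mem hjb hjl _ _)

theorem conj_x_transvectionAt_koszul_mem (hn : 4 ≤ n) {a b i k l : Fin n} (hab : a ≠ b)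
    (hik : i ≠ k) (hil : i ≠ l) (r : R) (u : Fin n → R) (c : R) :
    conj (x a b r) (transvectionAt i u (koszul u k l c)) ∈
      koszulSubgroup (u + Pi.single a (r * u b)) := by
  rcases eq_or_ne a k with rfl | hak
  · exact conj_x_transvectionAt_koszul_mem_of_left hn hab hik hil r u c
  rcases eq_or_ne a l with rfl | hal
  · rw [koszul_swap]
    exact conj_x_transvectionAt_koszul_mem_of_left hn hab hil hik r u (-c)
  obtain ⟨j, hjk, hjl, hja⟩ := exists_ne_ne_ne hn k l a
  rw [transvectionAt_congr_index (koszul_apply_of_ne hik hil u c) (koszul_apply_of_ne hjk hjl u c)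
      (dotProduct_koszul u k l c),
    conj_x_transvectionAt_of_apply_eq_zero hab hja.symm (koszul_apply_of_ne hak hal u c)
      (koszul_apply_of_ne hjk hjl u c) (dotProduct_koszul u k l c),
    ← koszul_add_single_of_ne hak hal u (r * u b)]
  exact transvectionAt_koszul_mem hjk hjl _ _

theorem conj_x_mem_koszulSubgroup (hn : 4 ≤ n) {a b : Fin n} (hab : a ≠ b) (r : R)
    {u : Fin n → R} {y : SteinbergGroup n R} (hy : y ∈ koszulSubgroup u) :
    conj (x a b r) y ∈ koszulSubgroup (u + Pi.single a (r * u b)) := by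
  suffices koszulSubgroup u ≤
      (koszulSubgroup (u + Pi.single a (r * u b))).comap (conj (x a b r)).toMonoidHom from this hy
  rw [koszulSubgroup, Subgroup.closure_le]
  rintro _ ⟨i, k, l, c, hik, hil, rfl⟩
  exact conj_x_transvectionAt_koszul_mem hn hab hik hil r u c

theorem conj_mem_koszulSubgroup (hn : 4 ≤ n) (g : SteinbergGroup n R) (u : Fin n → R)
    {y : SteinbergGroup n R} (hy : y ∈ koszulSubgroup u) :
    conj g y ∈ koszulSubgroup (toMatrix g *ᵥ u) := by
  induction g using induction_on generalizing u y with
  | one => simpa using hy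
  | mul g h hg hh =>
    rw [toMatrix_mul_mulVec, map_mul, mul_apply]
    exact hg _ (hh _ hy)
  | x a b hab r =>
    rw [toMatrix_x_mulVec hab]
    exact conj_x_mem_koszulSubgroup hn hab r hy

theorem transvectionAt_koszul_single {i l m : Fin n} (him : i ≠ m) (hil : i ≠ l) (hml : m ≠ l)
    (c : R) : transvectionAt i (Pi.single m 1) (koszul (Pi.single m 1) m l c) = x m l c := by
  rw [koszul_single hml, transvectionAt, col_single, row_single,
    commutator_x_x him.symm hil hml, Pi.single_eq_of_ne him, zero_smul, row_zero, one_mul, mul_one]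

theorem exists_row_eq_of_mem_koszulSubgroup {m : Fin n} {y : SteinbergGroup n R}
    (hy : y ∈ koszulSubgroup (Pi.single m 1)) : ∃ w : Fin n → R, w m = 0 ∧ row m w = y := by
  induction hy using Subgroup.closure_induction with
  | one => exact ⟨0, rfl, row_zero m⟩
  | mul _ _ _ _ hv hw =>
    obtain ⟨v, hv, rfl⟩ := hv
    obtain ⟨w, hw, rfl⟩ := hw
    exact ⟨v + w, by simp [hv, hw], row_add m v w⟩
  | inv _ _ hw =>
    obtain ⟨w, hw, rfl⟩ := hw
    exact ⟨-w, by simp [hw], row_neg m w⟩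
  | mem _ hy =>
    obtain ⟨i, k, l, c, hik, hil, rfl⟩ := hy
    rcases eq_or_ne k l with rfl | hkl
    · exact ⟨0, rfl, by simp⟩
    rcases eq_or_ne k m with rfl | hkm
    · exact ⟨Pi.single l c, by simp [hkl],
        by rw [transvectionAt_koszul_single hik hil hkl, row_single]⟩
    rcases eq_or_ne l m with rfl | hlm
    · exact ⟨Pi.single k (-c), by simp [hkl.symm],
        by rw [koszul_swap, transvectionAt_koszul_single hil hik hkl.symm, row_single]⟩
    · exact ⟨0, rfl, by simp [koszul_single_of_ne hkm hlm]⟩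

theorem row_mem_koszulSubgroup (hn : 3 ≤ n) (m : Fin n) (w : Fin n → R) :
    row m w ∈ koszulSubgroup (Pi.single m 1) := by
  induction w using vector_induction with
  | zero => simp [one_mem]
  | add v w _ _ hv hw => rw [row_add]; exact mul_mem hv hw
  | single k =>
    rcases eq_or_ne m k with rfl | hmk
    · simp [one_mem]
    obtain ⟨i, him, hik⟩ := exists_ne_ne hn m k
    rw [row_single, ← transvectionAt_koszul_single him hik hmk]
    exact transvectionAt_koszul_mem him hik _ _

theorem tMat_single_left_injective (m : Fin n) :
    Function.Injective (tMat (Pi.single m 1 : Fin n → R)) := by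
  intro v w h
  ext k
  simpa [tMat, Matrix.vecMulVec_apply] using congrFun₂ h m k

theorem conj_row_eq_row (hn : 4 ≤ n) {g : SteinbergGroup n R} {i j : Fin n}
    (hg : toMatrix g *ᵥ Pi.single i 1 = Pi.single j 1) {w : Fin n → R} (hw : w i = 0) :
    conj g (row i w) = row j (toMatrix (contragredient g) *ᵥ w) := by
  have hmem : conj g (row i w) ∈ koszulSubgroup (Pi.single j 1) :=
    hg ▸ conj_mem_koszulSubgroup hn g _ (row_mem_koszulSubgroup (Nat.le_of_succ_le hn) i w)
  obtain ⟨w', hw'j, hw'⟩ := exists_row_eq_of_mem_koszulSubgroup hmem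
  have hmat : tMat (Pi.single j 1) w' =
      tMat (Pi.single j 1) (toMatrix (contragredient g) *ᵥ w) := by
    rw [← toMatrix_row hw'j, hw', toMatrix_conj_row g hw, hg]
  rw [← hw', tMat_single_left_injective j hmat]

end Koszul

section Moves

variable {n : ℕ} {R : Type} [CommRing R]

/-- A Weyl group element, a lift of the signed transposition `e_a ↦ e_b ↦ -e_a`. -/
def weyl (a b : Fin n) : SteinbergGroup n R :=
  x a b (-1) * x b a 1 * x a b (-1)

theorem toMatrix_weyl_mulVec_single {a b : Fin n} (hab : a ≠ b) :
    toMatrix (weyl a b) *ᵥ Pi.single a 1 = (Pi.single b 1 : Fin n → R) := by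
  rw [weyl, toMatrix_mul_mulVec, toMatrix_mul_mulVec, toMatrix_x_mulVec hab,
    toMatrix_x_mulVec hab.symm, toMatrix_x_mulVec hab]
  simp [hab.symm, Pi.single_neg]

theorem toMatrix_weyl_mulVec_single_of_ne {a b c : Fin n} (hab : a ≠ b) (hca : c ≠ a)
    (hcb : c ≠ b) : toMatrix (weyl a b) *ᵥ Pi.single c 1 = (Pi.single c 1 : Fin n → R) := by
  rw [weyl, toMatrix_mul_mulVec, toMatrix_mul_mulVec, toMatrix_x_mulVec hab,
    toMatrix_x_mulVec hab.symm, toMatrix_x_mulVec hab]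
  simp [hca.symm, hcb.symm]

theorem toMatrix_contragredient_weyl {a b : Fin n} (hab : a ≠ b) :
    toMatrix (contragredient (weyl a b : SteinbergGroup n R)) = toMatrix (weyl a b) := by
  simp only [weyl, map_mul, contragredient_x, neg_neg, toMatrix_x hab, toMatrix_x hab.symm]
  simp only [← Matrix.single_neg]
  simp only [mul_add, mul_one, mul_neg, add_mul, one_mul, Matrix.single_mul_single_same,
    neg_add_rev, ne_eq, hab, not_false_eq_true, Matrix.single_mul_single_of_ne, add_zero, neg_mul,
    add_neg_cancel_left, hab.symm, neg_zero, add_neg_cancel_comm_assoc]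
  abel

theorem exists_move (a b : Fin n) : ∃ g : SteinbergGroup n R,
    toMatrix (contragredient g) = toMatrix g ∧ toMatrix g *ᵥ Pi.single a 1 = Pi.single b 1 ∧
      ∀ c, c ≠ a → c ≠ b → toMatrix g *ᵥ Pi.single c 1 = Pi.single c 1 := by
  rcases eq_or_ne a b with rfl | hab
  · exact ⟨1, by rw [map_one], by rw [map_one, Matrix.one_mulVec],
      fun _ _ _ => by rw [map_one, Matrix.one_mulVec]⟩
  · exact ⟨weyl a b, toMatrix_contragredient_weyl hab, toMatrix_weyl_mulVec_single hab,
      fun c => toMatrix_weyl_mulVec_single_of_ne hab⟩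

theorem exists_move_pair_of_ne {i j k l : Fin n} (hij : i ≠ j) (hjk : j ≠ k) (hkl : k ≠ l) :
    ∃ g : SteinbergGroup n R, toMatrix g *ᵥ Pi.single i 1 = Pi.single k 1 ∧
      toMatrix (contragredient g) *ᵥ Pi.single j 1 = Pi.single l 1 := by
  obtain ⟨g, hg, hgi, hgj⟩ := exists_move (R := R) i k
  obtain ⟨h, hh, hhj, hhk⟩ := exists_move (R := R) j l
  refine ⟨h * g, ?_, ?_⟩
  · rw [toMatrix_mul_mulVec, hgi, hhk k hjk.symm hkl]
  · rw [map_mul, toMatrix_mul_mulVec, hg, hgj j hij.symm hjk, hh, hhj]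

theorem exists_move_pair (hn : 3 ≤ n) {i j k l : Fin n} (hij : i ≠ j) (hkl : k ≠ l) :
    ∃ g : SteinbergGroup n R, toMatrix g *ᵥ Pi.single i 1 = Pi.single k 1 ∧
      toMatrix (contragredient g) *ᵥ Pi.single j 1 = Pi.single l 1 := by
  obtain ⟨m, hmi, hmk⟩ := exists_ne_ne hn i k
  obtain ⟨g, hgi, hgj⟩ := exists_move_pair_of_ne (R := R) hij hij.symm hmi.symm
  obtain ⟨h, hhi, hhm⟩ := exists_move_pair_of_ne (R := R) hmi.symm hmk hkl
  refine ⟨h * g, ?_, ?_⟩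
  · rw [toMatrix_mul_mulVec, hgi, hhi]
  · rw [map_mul, toMatrix_mul_mulVec, hgj, hhm]

end Moves

section ElementaryColumns

variable {n : ℕ} {R : Type} [CommRing R]

theorem range_toGL : (toGL : SteinbergGroup n R →* _).range = Elem n R := by
  refine le_antisymm ?_ ((Subgroup.closure_le _).2 ?_)
  · rintro _ ⟨g, rfl⟩
    induction g using induction_on with
    | one => rw [map_one]; exact one_mem _
    | mul g h hg hh => rw [map_mul]; exact mul_mem hg hh
    | x i j hij r => exact Subgroup.subset_closure ⟨i, j, hij, r, toMatrix_x hij r⟩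
  · rintro M ⟨i, j, hij, r, hM⟩
    exact ⟨x i j r, Units.ext ((toMatrix_x hij r).trans hM.symm)⟩

theorem mem_Elem_iff {M : Matrix.GeneralLinearGroup (Fin n) R} :
    M ∈ Elem n R ↔ ∃ g, toGL g = M := by
  rw [← range_toGL, MonoidHom.mem_range]

theorem mem_Ecol_iff [NeZero n] {u : Fin n → R} :
    u ∈ Ecol n R ↔ ∃ g, toMatrix g *ᵥ Pi.single 0 1 = u := by
  constructor
  · rintro ⟨M, hM, rfl⟩
    obtain ⟨g, rfl⟩ := mem_Elem_iff.1 hM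
    exact ⟨g, Matrix.mulVec_single_one _ _⟩
  · rintro ⟨g, rfl⟩
    exact ⟨toGL g, mem_Elem_iff.2 ⟨g, rfl⟩, Matrix.mulVec_single_one _ _⟩

theorem toMatrix_mulVec_mem_Ecol [NeZero n] (g : SteinbergGroup n R) {u : Fin n → R}
    (hu : u ∈ Ecol n R) : toMatrix g *ᵥ u ∈ Ecol n R := by
  obtain ⟨h, rfl⟩ := mem_Ecol_iff.1 hu
  exact mem_Ecol_iff.2 ⟨g * h, toMatrix_mul_mulVec g h _⟩

theorem single_mem_Ecol [NeZero n] (i : Fin n) : (Pi.single i 1 : Fin n → R) ∈ Ecol n R := by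
  obtain ⟨g, -, hg, -⟩ := exists_move (R := R) 0 i
  exact mem_Ecol_iff.2 ⟨g, hg⟩

theorem exists_mulVec_contragredient_mulVec [NeZero n] {u v : Fin n → R} (hu : u ∈ Ecol n R)
    (huv : u ⬝ᵥ v = 0) : ∃ (g : SteinbergGroup n R) (w : Fin n → R), w 0 = 0 ∧
      toMatrix g *ᵥ Pi.single 0 1 = u ∧ toMatrix (contragredient g) *ᵥ w = v := by
  obtain ⟨g, rfl⟩ := mem_Ecol_iff.1 hu
  obtain ⟨w, rfl⟩ : ∃ w, toMatrix (contragredient g) *ᵥ w = v :=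
    ⟨_, toMatrix_mulVec_inv_mulVec (contragredient g) v⟩
  rw [dotProduct_toMatrix_contragredient, single_one_dotProduct] at huv
  exact ⟨g, w, huv, rfl, rfl⟩

theorem exists_toMatrix_eq_tMat [NeZero n] {u v : Fin n → R} (hu : u ∈ Ecol n R)
    (huv : u ⬝ᵥ v = 0) : ∃ g : SteinbergGroup n R, toMatrix g = tMat u v := by
  obtain ⟨g, w, hw, rfl, rfl⟩ := exists_mulVec_contragredient_mulVec hu huv
  exact ⟨conj g (row 0 w), toMatrix_conj_row g hw⟩

end ElementaryColumns

section Transvection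

variable {n : ℕ} [NeZero n] {R : Type} [CommRing R]

/-- The lift `X(u, v)` of the transvection `1 + u vᵀ`, for `u` in the orbit of `e₀` and `v`
orthogonal to `u`: the conjugate of a row element by any `g` with `g e₀ = u`. -/
noncomputable def transvection (u v : Fin n → R) : SteinbergGroup n R :=
  let g := Classical.epsilon fun g => toMatrix g *ᵥ Pi.single 0 1 = u
  conj g (row 0 (toMatrix (contragredient g⁻¹) *ᵥ v))

theorem transvection_mulVec (hn : 4 ≤ n) (g : SteinbergGroup n R) {i : Fin n} {w : Fin n → R}
    (hw : w i = 0) :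
    transvection (toMatrix g *ᵥ Pi.single i 1) (toMatrix (contragredient g) *ᵥ w) =
      conj g (row i w) := by
  set h := Classical.epsilon fun h => toMatrix h *ᵥ Pi.single 0 1 = toMatrix g *ᵥ Pi.single i 1
  have hh : toMatrix h *ᵥ Pi.single 0 1 = toMatrix g *ᵥ Pi.single i 1 :=
    Classical.epsilon_spec (mem_Ecol_iff.1 (toMatrix_mulVec_mem_Ecol g (single_mem_Ecol i)))
  have hmove : toMatrix (h⁻¹ * g) *ᵥ Pi.single i 1 = Pi.single 0 1 := by
    rw [toMatrix_mul_mulVec, ← hh, toMatrix_inv_mulVec_mulVec]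
  have hrow := conj_row_eq_row hn hmove hw
  change conj h (row 0 (toMatrix (contragredient h⁻¹) *ᵥ toMatrix (contragredient g) *ᵥ w)) = _
  rw [← toMatrix_mul_mulVec, ← map_mul, ← hrow, ← mul_apply, ← map_mul, mul_inv_cancel_left]

theorem transvection_single (hn : 4 ≤ n) {i : Fin n} {v : Fin n → R} (hv : v i = 0) :
    transvection (Pi.single i 1) v = row i v := by
  simpa [-Matrix.mulVec_single] using transvection_mulVec hn 1 hv

theorem transvection_add (hn : 4 ≤ n) {u v w : Fin n → R} (hu : u ∈ Ecol n R) (huv : u ⬝ᵥ v = 0)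
    (huw : u ⬝ᵥ w = 0) :
    transvection u (v + w) = transvection u v * transvection u w := by
  obtain ⟨g, v', hv', rfl, rfl⟩ := exists_mulVec_contragredient_mulVec hu huv
  obtain ⟨w', rfl⟩ : ∃ w', toMatrix (contragredient g) *ᵥ w' = w :=
    ⟨_, toMatrix_mulVec_inv_mulVec (contragredient g) w⟩
  rw [dotProduct_toMatrix_contragredient, single_one_dotProduct] at huw
  rw [← Matrix.mulVec_add, transvection_mulVec hn g hv', transvection_mulVec hn g huw,
    transvection_mulVec hn g (by simp [hv', huw]), row_add, map_mul]

theorem conj_transvection (hn : 4 ≤ n) (g : SteinbergGroup n R) {u v : Fin n → R}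
    (hu : u ∈ Ecol n R) (huv : u ⬝ᵥ v = 0) :
    conj g (transvection u v) =
      transvection (toMatrix g *ᵥ u) (toMatrix (contragredient g) *ᵥ v) := by
  obtain ⟨h, w, hw, rfl, rfl⟩ := exists_mulVec_contragredient_mulVec hu huv
  rw [transvection_mulVec hn h hw, ← toMatrix_mul_mulVec, ← toMatrix_mul_mulVec, ← map_mul,
    transvection_mulVec hn (g * h) hw, map_mul, mul_apply]

theorem toMatrix_transvection (hn : 4 ≤ n) {u v : Fin n → R} (hu : u ∈ Ecol n R)
    (huv : u ⬝ᵥ v = 0) : toMatrix (transvection u v) = tMat u v := by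
  obtain ⟨g, w, hw, rfl, rfl⟩ := exists_mulVec_contragredient_mulVec hu huv
  rw [transvection_mulVec hn g hw, toMatrix_conj_row g hw]

theorem toMatrix_contragredient_transvection (hn : 4 ≤ n) {u v : Fin n → R} (hu : u ∈ Ecol n R)
    (huv : u ⬝ᵥ v = 0) : toMatrix (contragredient (transvection u v)) = tMat (-v) u :=
  toMatrix_contragredient_of_toMatrix_eq_tMat huv (toMatrix_transvection hn hu huv)

end Transvection

end SteinbergGroup

/-! ### The group `St*(n, R, I)` -/

namespace StStar

open SteinbergGroup

section Presentation

variable {n : ℕ} [NeZero n] {R : Type} [CommRing R] {I : Ideal R}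

theorem single_apply_mem {ι : Type*} [DecidableEq ι] {s : R} (hs : s ∈ I) (i k : ι) :
    (Pi.single i s : ι → R) k ∈ I := by
  rw [Pi.single_apply]
  split_ifs
  exacts [hs, I.zero_mem]

/-- The pairs `(u, v)` indexing the generators `F(u, v)`. The generators `S(u, v)` are indexed by
the pairs for which `(v, u)` is admissible. -/
structure IsAdmissible (I : Ideal R) (u v : Fin n → R) : Prop where
  mem_Ecol : u ∈ Ecol n R
  mem_ideal : ∀ i, v i ∈ I
  dotProduct_eq_zero : u ⬝ᵥ v = 0

namespace IsAdmissible

theorem zero {u : Fin n → R} (hu : u ∈ Ecol n R) : IsAdmissible I u 0 :=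
  ⟨hu, fun _ => I.zero_mem, dotProduct_zero u⟩

theorem add {u v w : Fin n → R} (hv : IsAdmissible I u v) (hw : IsAdmissible I u w) :
    IsAdmissible I u (v + w) :=
  ⟨hv.mem_Ecol, fun i => I.add_mem (hv.mem_ideal i) (hw.mem_ideal i), by
    rw [dotProduct_add, hv.dotProduct_eq_zero, hw.dotProduct_eq_zero, add_zero]⟩

theorem mulVec {u v : Fin n → R} (h : IsAdmissible I u v) (g : SteinbergGroup n R) :
    IsAdmissible I (toMatrix g *ᵥ u) (toMatrix (contragredient g) *ᵥ v) :=
  ⟨toMatrix_mulVec_mem_Ecol g h.mem_Ecol,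
    fun i => show ∑ j, _ ∈ I from I.sum_mem fun j _ => I.mul_mem_left _ (h.mem_ideal j), by
    rw [dotProduct_toMatrix_contragredient, h.dotProduct_eq_zero]⟩

theorem contragredient_mulVec {u v : Fin n → R} (h : IsAdmissible I u v)
    (g : SteinbergGroup n R) :
    IsAdmissible I (toMatrix (contragredient g) *ᵥ u) (toMatrix g *ᵥ v) := by
  simpa only [contragredient_contragredient] using h.mulVec (contragredient g)

theorem transvect {u v u' v' : Fin n → R} (h : IsAdmissible I u v) (h' : IsAdmissible I u' v') :
    IsAdmissible I (tMat u v *ᵥ u') (tMat (-v) u *ᵥ v') := by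
  obtain ⟨g, hg⟩ := exists_toMatrix_eq_tMat h.mem_Ecol h.dotProduct_eq_zero
  rw [← hg, ← toMatrix_contragredient_of_toMatrix_eq_tMat h.dotProduct_eq_zero hg]
  exact h'.mulVec g

theorem single {i j : Fin n} (hij : i ≠ j) {s : R} (hs : s ∈ I) :
    IsAdmissible I (Pi.single i 1) (Pi.single j s) :=
  ⟨single_mem_Ecol i, single_apply_mem hs j, by simp [hij]⟩

theorem single_swap {i j : Fin n} {s : R} (h : IsAdmissible I (Pi.single i 1) (Pi.single j s)) :
    IsAdmissible I (Pi.single j 1) (Pi.single i s) := by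
  rcases eq_or_ne i j with rfl | hij
  · exact h
  · exact single hij.symm (by simpa using h.mem_ideal j)

@[elab_as_elim]
theorem induction_on {i : Fin n} {P : (Fin n → R) → Prop} {v : Fin n → R}
    (h : IsAdmissible I (Pi.single i 1) v) (zero : P 0)
    (add : ∀ v w, IsAdmissible I (Pi.single i 1) v → IsAdmissible I (Pi.single i 1) w →
      P v → P w → P (v + w))
    (single : ∀ j, i ≠ j → ∀ s ∈ I, P (Pi.single j s)) : P v := by
  have hzero := IsAdmissible.zero (I := I) (single_mem_Ecol (R := R) i)
  have hvi : v i = 0 := by simpa using h.dotProduct_eq_zero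
  suffices IsAdmissible I (Pi.single i 1) v ∧ P v from this.2
  refine vector_induction (P := fun v => IsAdmissible I (Pi.single i 1) v ∧ P v) v ⟨hzero, zero⟩
    (fun v w _ _ hv hw => ⟨hv.1.add hw.1, add v w hv.1 hw.1 hv.2 hw.2⟩) fun j => ?_
  rcases eq_or_ne i j with rfl | hij
  · rw [hvi, Pi.single_zero]
    exact ⟨hzero, zero⟩
  · exact ⟨.single hij (h.mem_ideal j), single j hij _ (h.mem_ideal j)⟩

end IsAdmissible

open Classical in
/-- The generator `F(u, v)`, with the junk value `1` off the admissible pairs. -/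
noncomputable def F (I : Ideal R) (u v : Fin n → R) : StStar n R I :=
  if h : IsAdmissible I u v then
    PresentedGroup.of (.F u v h.mem_Ecol h.mem_ideal h.dotProduct_eq_zero)
  else 1

open Classical in
/-- The generator `S(u, v)`, with the junk value `1` unless `(v, u)` is admissible. -/
noncomputable def S (I : Ideal R) (u v : Fin n → R) : StStar n R I :=
  if h : IsAdmissible I v u then
    PresentedGroup.of (.S u v h.mem_ideal h.mem_Ecol
      ((dotProduct_comm u v).trans h.dotProduct_eq_zero))
  else 1

theorem of_F {u v : Fin n → R} (hu : u ∈ Ecol n R) (hv : ∀ i, v i ∈ I) (huv : u ⬝ᵥ v = 0) :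
    (PresentedGroup.of (.F u v hu hv huv) : StStar n R I) = F I u v := by
  rw [F, dif_pos ⟨hu, hv, huv⟩]

theorem of_S {u v : Fin n → R} (hu : ∀ i, u i ∈ I) (hv : v ∈ Ecol n R) (huv : u ⬝ᵥ v = 0) :
    (PresentedGroup.of (.S u v hu hv huv) : StStar n R I) = S I u v := by
  rw [S, dif_pos ⟨hv, hu, (dotProduct_comm v u).trans huv⟩]

theorem F_add {u v w : Fin n → R} (hv : IsAdmissible I u v) (hw : IsAdmissible I u w) :
    F I u (v + w) = F I u v * F I u w := by
  obtain ⟨hu, hvI, huv⟩ := hv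
  obtain ⟨-, hwI, huw⟩ := hw
  obtain ⟨-, hvwI, huvw⟩ : IsAdmissible I u (v + w) := .add ⟨hu, hvI, huv⟩ ⟨hu, hwI, huw⟩
  rw [← of_F hu hvI huv, ← of_F hu hwI huw, ← of_F hu hvwI huvw]
  exact (mul_inv_eq_one.1 (PresentedGroup.one_of_mem
    (StarRels.addF u v w hu hvI hwI hvwI huv huw huvw))).symm

theorem S_add {u v w : Fin n → R} (hu : IsAdmissible I v u) (hw : IsAdmissible I v w) :
    S I (u + w) v = S I u v * S I w v := by
  obtain ⟨huwI, hvuw⟩ := (hu.add hw).mem_ideal, (hu.add hw).dotProduct_eq_zero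
  obtain ⟨hv, huI, hvu⟩ := hu
  obtain ⟨-, hwI, hvw⟩ := hw
  rw [dotProduct_comm] at hvu hvw hvuw
  rw [← of_S huI hv hvu, ← of_S hwI hv hvw, ← of_S huwI hv hvuw]
  exact (mul_inv_eq_one.1 (PresentedGroup.one_of_mem
    (StarRels.addS u w v huI hwI huwI hv hvu hvw hvuw))).symm

theorem F_zero {u : Fin n → R} (hu : u ∈ Ecol n R) : F I u 0 = 1 := by
  simpa using F_add (IsAdmissible.zero (I := I) hu) (.zero hu)

theorem S_zero {v : Fin n → R} (hv : v ∈ Ecol n R) : S I 0 v = 1 := by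
  simpa using S_add (IsAdmissible.zero (I := I) hv) (.zero hv)

theorem conj_F_F {u v u' v' : Fin n → R} (h : IsAdmissible I u v) (h' : IsAdmissible I u' v') :
    conj (F I u v) (F I u' v') = F I (tMat u v *ᵥ u') (tMat (-v) u *ᵥ v') := by
  obtain ⟨hu'', hv'', huv''⟩ := h.transvect h'
  obtain ⟨hu, hv, huv⟩ := h
  obtain ⟨hu', hv', huv'⟩ := h'
  simp only [← one_sub_vecMulVec] at hv'' huv'' ⊢
  rw [conj_apply, ← of_F hu hv huv, ← of_F hu' hv' huv', ← of_F hu'' hv'' huv'']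
  exact mul_inv_eq_one.1 (PresentedGroup.one_of_mem
    (StarRels.conjF u v u' v' hu hv huv hu' hv' huv' hu'' hv'' huv''))

theorem F_mulVec_eq_S (g : SteinbergGroup n R) {a : R}
    (h : IsAdmissible I (Pi.single (0 : Fin n) 1) (Pi.single 1 a)) :
    F I (toMatrix g *ᵥ Pi.single 0 1) (toMatrix (contragredient g) *ᵥ Pi.single 1 a) =
      S I (toMatrix g *ᵥ Pi.single 0 a) (toMatrix (contragredient g) *ᵥ Pi.single 1 1) := by
  have ha : a ∈ I := by simpa using h.mem_ideal 1
  obtain ⟨hu, hv, huv⟩ := h.mulVec g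
  obtain ⟨hu', hv', huv'⟩ := h.single_swap.contragredient_mulVec g
  rw [dotProduct_comm] at huv'
  simp only [← colM_toGL g 0, ← smul_colM_toGL a g 0, ← starCol_toGL g 1,
    ← smul_starCol_toGL a g 1] at *
  rw [← of_F hu hv huv, ← of_S hv' hu' huv']
  exact mul_inv_eq_one.1 (PresentedGroup.one_of_mem
    (StarRels.coinc (toGL g) (mem_Elem_iff.2 ⟨g, rfl⟩) a ha hu hv huv hv' hu' huv'))

theorem isAdmissible_of_colM {M : Matrix.GeneralLinearGroup (Fin n) R} (hM : M ∈ Elem n R) {a : R}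
    (ha : a ∈ I) (h : colM M 0 ⬝ᵥ (a • starCol M 1) = 0) :
    IsAdmissible I (Pi.single (0 : Fin n) 1) (Pi.single 1 a) := by
  obtain ⟨g, rfl⟩ := mem_Elem_iff.1 hM
  rw [colM_toGL, smul_starCol_toGL, dotProduct_toMatrix_contragredient] at h
  exact ⟨single_mem_Ecol 0, single_apply_mem ha 1, h⟩

/-- The universal property of `St*(n, R, I)`. -/
def lift {G : Type*} [Group G] (f s : (Fin n → R) → (Fin n → R) → G)
    (f_add : ∀ u v w, IsAdmissible I u v → IsAdmissible I u w → f u (v + w) = f u v * f u w)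
    (s_add : ∀ u w v, IsAdmissible I v u → IsAdmissible I v w → s (u + w) v = s u v * s w v)
    (conj_f : ∀ u v u' v', IsAdmissible I u v → IsAdmissible I u' v' →
      conj (f u v) (f u' v') = f (tMat u v *ᵥ u') (tMat (-v) u *ᵥ v'))
    (f_eq_s : ∀ (g : SteinbergGroup n R) (a : R),
      IsAdmissible I (Pi.single (0 : Fin n) 1) (Pi.single 1 a) →
        f (toMatrix g *ᵥ Pi.single 0 1) (toMatrix (contragredient g) *ᵥ Pi.single 1 a) =
          s (toMatrix g *ᵥ Pi.single 0 a) (toMatrix (contragredient g) *ᵥ Pi.single 1 1)) :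
    StStar n R I →* G :=
  PresentedGroup.toGroup
      (f := fun | .F u v _ _ _ => f u v | .S u v _ _ _ => s u v) <| by
    rintro _ (⟨u, v, w, hu, hv, hw, -, huv, huw, -⟩ | ⟨u, w, v, hu, hw, -, hv, huv, hwv, -⟩ |
      ⟨u, v, u', v', hu, hv, huv, hu', hv', huv', -, -, -⟩ | ⟨M, hM, a, ha, -, -, h, -, -, -⟩)
    · simp [f_add u v w ⟨hu, hv, huv⟩ ⟨hu, hw, huw⟩]
    · rw [dotProduct_comm] at huv hwv
      simp [s_add u w v ⟨hv, hu, huv⟩ ⟨hv, hw, hwv⟩]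
    · have := conj_f u v u' v' ⟨hu, hv, huv⟩ ⟨hu', hv', huv'⟩
      simp [one_sub_vecMulVec, ← this]
    · have hadm := isAdmissible_of_colM hM ha h
      obtain ⟨g, rfl⟩ := mem_Elem_iff.1 hM
      have := f_eq_s g a hadm
      rw [← colM_toGL g 0, ← smul_colM_toGL a g 0, ← starCol_toGL g 1,
        ← smul_starCol_toGL a g 1] at this
      simp [this]

section Lift

variable {G : Type*} [Group G] {f s : (Fin n → R) → (Fin n → R) → G}
  {f_add s_add conj_f f_eq_s} {u v : Fin n → R}

theorem lift_F (h : IsAdmissible I u v) :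
    lift f s f_add s_add conj_f f_eq_s (F I u v) = f u v := by
  rw [← of_F h.mem_Ecol h.mem_ideal h.dotProduct_eq_zero]
  exact PresentedGroup.toGroup.of _

theorem lift_S (h : IsAdmissible I v u) :
    lift f s f_add s_add conj_f f_eq_s (S I u v) = s u v := by
  rw [← of_S h.mem_ideal h.mem_Ecol ((dotProduct_comm u v).trans h.dotProduct_eq_zero)]
  exact PresentedGroup.toGroup.of _

end Lift

theorem hom_ext {G : Type*} [Group G] {f f' : StStar n R I →* G}
    (hF : ∀ u v, IsAdmissible I u v → f (F I u v) = f' (F I u v))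
    (hS : ∀ u v, IsAdmissible I v u → f (S I u v) = f' (S I u v)) : f = f' := by
  refine PresentedGroup.ext ?_
  rintro (⟨u, v, hu, hv, huv⟩ | ⟨u, v, hu, hv, huv⟩)
  · simpa only [of_F] using hF u v ⟨hu, hv, huv⟩
  · simpa only [of_S] using hS u v ⟨hv, hu, (dotProduct_comm v u).trans huv⟩

end Presentation

section Action

variable {n : ℕ} [NeZero n] {R : Type} [CommRing R] {I : Ideal R}

/-- The endomorphism of `St*(n, R, I)` through which `g ∈ St(n, R)` acts. -/
noncomputable def actEnd (g : SteinbergGroup n R) : StStar n R I →* StStar n R I :=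
  lift (fun u v => F I (toMatrix g *ᵥ u) (toMatrix (contragredient g) *ᵥ v))
    (fun u v => S I (toMatrix g *ᵥ u) (toMatrix (contragredient g) *ᵥ v))
    (fun u v w hv hw => by rw [Matrix.mulVec_add, F_add (hv.mulVec g) (hw.mulVec g)])
    (fun u w v hu hw => by
      rw [Matrix.mulVec_add, S_add (hu.contragredient_mulVec g) (hw.contragredient_mulVec g)])
    (fun u v u' v' h h' => by
      rw [conj_F_F (h.mulVec g) (h'.mulVec g)]
      simp only [tMat_mulVec, Matrix.mulVec_add, Matrix.mulVec_smul, Matrix.mulVec_neg,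
        dotProduct_toMatrix_contragredient, dotProduct_comm _ (toMatrix g *ᵥ u'),
        dotProduct_comm v])
    (fun h a ha => by
      simpa only [toMatrix_mul_mulVec, map_mul contragredient] using F_mulVec_eq_S (g * h) ha)

theorem actEnd_F (g : SteinbergGroup n R) {u v : Fin n → R} (h : IsAdmissible I u v) :
    actEnd g (F I u v) = F I (toMatrix g *ᵥ u) (toMatrix (contragredient g) *ᵥ v) :=
  lift_F h

theorem actEnd_S (g : SteinbergGroup n R) {u v : Fin n → R} (h : IsAdmissible I v u) :
    actEnd g (S I u v) = S I (toMatrix g *ᵥ u) (toMatrix (contragredient g) *ᵥ v) :=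
  lift_S h

theorem actEnd_one : actEnd (1 : SteinbergGroup n R) = MonoidHom.id (StStar n R I) := by
  refine hom_ext (fun u v h => ?_) (fun u v h => ?_)
  · simp [actEnd_F 1 h]
  · simp [actEnd_S 1 h]

theorem actEnd_mul (g h : SteinbergGroup n R) :
    (actEnd (g * h) : StStar n R I →* _) = (actEnd g).comp (actEnd h) := by
  refine hom_ext (fun u v hv => ?_) (fun u v hu => ?_)
  · rw [MonoidHom.comp_apply, actEnd_F h hv, actEnd_F g (hv.mulVec h), actEnd_F _ hv,
      toMatrix_mul_mulVec, map_mul contragredient, toMatrix_mul_mulVec]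
  · rw [MonoidHom.comp_apply, actEnd_S h hu, actEnd_S g (hu.contragredient_mulVec h),
      actEnd_S _ hu, toMatrix_mul_mulVec, map_mul contragredient, toMatrix_mul_mulVec]

/-- The action of `St(n, R)` on `St*(n, R, I)` that is natural on indices: `g` sends `F(u, v)` to
`F(M u, (M⁻¹)ᵀ v)`, where `M` is the image of `g` in `GL(n, R)`, and likewise for `S`. -/
noncomputable def act : SteinbergGroup n R →* MulAut (StStar n R I) where
  toFun g := (actEnd g).toMulEquiv (actEnd g⁻¹)
    (by rw [← actEnd_mul, inv_mul_cancel, actEnd_one])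
    (by rw [← actEnd_mul, mul_inv_cancel, actEnd_one])
  map_one' := MulEquiv.ext fun y => DFunLike.congr_fun actEnd_one y
  map_mul' g h := MulEquiv.ext fun y => DFunLike.congr_fun (actEnd_mul g h) y

theorem act_F (g : SteinbergGroup n R) {u v : Fin n → R} (h : IsAdmissible I u v) :
    act g (F I u v) = F I (toMatrix g *ᵥ u) (toMatrix (contragredient g) *ᵥ v) :=
  actEnd_F g h

theorem act_S (g : SteinbergGroup n R) {u v : Fin n → R} (h : IsAdmissible I v u) :
    act g (S I u v) = S I (toMatrix g *ᵥ u) (toMatrix (contragredient g) *ᵥ v) :=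
  actEnd_S g h

end Action

section Generation

variable {n : ℕ} [NeZero n] {R : Type} [CommRing R] {I : Ideal R}

theorem F_single_single_eq_S (hn : 3 ≤ n) {i j : Fin n} (hij : i ≠ j) {s : R} (hs : s ∈ I) :
    F I (Pi.single i 1) (Pi.single j s) = S I (Pi.single i s) (Pi.single j 1) := by
  have h01 : (0 : Fin n) ≠ 1 := Fin.ne_of_val_ne <| by
    simp [Nat.mod_eq_of_lt (Nat.lt_of_lt_of_le (by decide : 1 < 3) hn)]
  obtain ⟨g, hgi, hgj⟩ := exists_move_pair (R := R) hn h01 hij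
  have hsmul (k : Fin n) : (Pi.single k s : Fin n → R) = s • Pi.single k 1 := by
    rw [← Pi.single_smul, smul_eq_mul, mul_one]
  have := F_mulVec_eq_S g (.single h01 hs)
  rwa [hsmul 1, hsmul 0, Matrix.mulVec_smul, Matrix.mulVec_smul, hgi, hgj, ← hsmul, ← hsmul] at this

/-- The set of generators `F(u, v)` of `St*(n, R, I)`. -/
def generatorsF (n : ℕ) [NeZero n] (I : Ideal R) : Set (StStar n R I) :=
  {y | ∃ u v, IsAdmissible I u v ∧ F I u v = y}

theorem act_mem_closure_generatorsF (g : SteinbergGroup n R) {y : StStar n R I}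
    (hy : y ∈ Subgroup.closure (generatorsF n I)) :
    act g y ∈ Subgroup.closure (generatorsF n I) := by
  suffices Subgroup.closure (generatorsF n I) ≤
      (Subgroup.closure (generatorsF n I)).comap (act g).toMonoidHom from this hy
  rw [Subgroup.closure_le]
  rintro _ ⟨u, v, h, rfl⟩
  exact Subgroup.subset_closure ⟨_, _, h.mulVec g, (act_F g h).symm⟩

theorem S_mem_closure_generatorsF (hn : 3 ≤ n) {u v : Fin n → R} (h : IsAdmissible I v u) :
    S I u v ∈ Subgroup.closure (generatorsF n I) := by
  obtain ⟨g, w, -, hgv, hgw⟩ :=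
    exists_mulVec_contragredient_mulVec h.mem_Ecol h.dotProduct_eq_zero
  have hw : IsAdmissible I (Pi.single 0 1) w := by
    simpa only [← hgv, ← hgw, map_inv, toMatrix_inv_mulVec_mulVec] using h.mulVec g⁻¹
  have hmem : S I w (Pi.single 0 1) ∈ Subgroup.closure (generatorsF n I) := by
    refine hw.induction_on ?_ (fun w w' hw hw' ih ih' => ?_) fun j hj s hs => ?_
    · rw [S_zero (single_mem_Ecol 0)]
      exact one_mem _
    · rw [S_add hw hw']
      exact mul_mem ih ih'
    · rw [← F_single_single_eq_S hn hj.symm hs]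
      exact Subgroup.subset_closure ⟨_, _, .single hj.symm hs, rfl⟩
  rw [← hgv, ← hgw]
  simpa only [act_S _ hw, contragredient_contragredient] using
    act_mem_closure_generatorsF (contragredient g) hmem

theorem closure_generatorsF (hn : 3 ≤ n) : Subgroup.closure (generatorsF n I) = ⊤ := by
  rw [eq_top_iff, ← PresentedGroup.closure_range_of, Subgroup.closure_le]
  rintro _ ⟨⟨u, v, hu, hv, huv⟩ | ⟨u, v, hu, hv, huv⟩, rfl⟩
  · exact Subgroup.subset_closure ⟨u, v, ⟨hu, hv, huv⟩, (of_F hu hv huv).symm⟩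
  · rw [of_S]
    exact S_mem_closure_generatorsF hn ⟨hv, hu, (dotProduct_comm v u).trans huv⟩

theorem hom_ext_F (hn : 3 ≤ n) {G : Type*} [Group G] {f f' : StStar n R I →* G}
    (h : ∀ u v, IsAdmissible I u v → f (F I u v) = f' (F I u v)) : f = f' :=
  MonoidHom.eq_of_eqOn_dense (closure_generatorsF hn) <| by
    rintro _ ⟨u, v, huv, rfl⟩
    exact h u v huv

end Generation

/-! ### The comparison homomorphism -/

section Theta

variable {n : ℕ} [NeZero n] {R : Type} [CommRing R] {I : Ideal R}

/-- The homomorphism `St*(n, R, I) → St(n, R)` sending `F(u, v)` to the transvection `X(u, v)` and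
`S(u, v)` to the contragredient of `X(v, -u)`. -/
noncomputable def theta (hn : 4 ≤ n) (I : Ideal R) : StStar n R I →* SteinbergGroup n R :=
  lift transvection (fun u v => contragredient (transvection v (-u)))
    (fun u v w hv hw =>
      transvection_add hn hv.mem_Ecol hv.dotProduct_eq_zero hw.dotProduct_eq_zero)
    (fun u w v hu hw => by
      rw [neg_add, transvection_add hn hu.mem_Ecol (by simp [hu.dotProduct_eq_zero])
        (by simp [hw.dotProduct_eq_zero]), map_mul])
    (fun u v u' v' h h' => by
      rw [conj_transvection hn _ h'.mem_Ecol h'.dotProduct_eq_zero,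
        toMatrix_transvection hn h.mem_Ecol h.dotProduct_eq_zero,
        toMatrix_contragredient_transvection hn h.mem_Ecol h.dotProduct_eq_zero])
    (fun g a h => by
      have h₁ : (Pi.single 1 a : Fin n → R) 0 = 0 := by
        simpa only [single_one_dotProduct] using h.dotProduct_eq_zero
      have h₀ : (Pi.single 0 (-a) : Fin n → R) 1 = 0 := by
        simpa only [single_one_dotProduct, Pi.single_neg, Pi.neg_apply, neg_eq_zero] using
          h.single_swap.dotProduct_eq_zero
      have hS := transvection_mulVec hn (contragredient g) h₀
      rw [contragredient_contragredient, Pi.single_neg, Matrix.mulVec_neg] at hS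
      rw [transvection_mulVec hn g h₁, hS, contragredient_conj, contragredient_contragredient,
        ← col, row_single, col_single])

theorem theta_F (hn : 4 ≤ n) {u v : Fin n → R} (h : IsAdmissible I u v) :
    theta hn I (F I u v) = transvection u v :=
  lift_F h

theorem theta_S (hn : 4 ≤ n) {u v : Fin n → R} (h : IsAdmissible I v u) :
    theta hn I (S I u v) = contragredient (transvection v (-u)) :=
  lift_S h

theorem toMatrix_theta_F (hn : 4 ≤ n) {u v : Fin n → R} (h : IsAdmissible I u v) :
    toMatrix (theta hn I (F I u v)) = tMat u v := by
  rw [theta_F hn h, toMatrix_transvection hn h.mem_Ecol h.dotProduct_eq_zero]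

theorem toMatrix_theta_S (hn : 4 ≤ n) {u v : Fin n → R} (h : IsAdmissible I v u) :
    toMatrix (theta hn I (S I u v)) = tMat u v := by
  rw [theta_S hn h, toMatrix_contragredient_transvection hn h.mem_Ecol
    (by rw [dotProduct_neg, h.dotProduct_eq_zero, neg_zero]), neg_neg]

theorem theta_act (hn : 4 ≤ n) (g : SteinbergGroup n R) (y : StStar n R I) :
    theta hn I (act g y) = conj g (theta hn I y) := by
  suffices (theta hn I).comp (act g).toMonoidHom = (conj g).toMonoidHom.comp (theta hn I) from
    DFunLike.congr_fun this y
  refine hom_ext_F (Nat.le_of_succ_le hn) fun u v h => ?_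
  change theta hn I (act g (F I u v)) = conj g (theta hn I (F I u v))
  rw [act_F g h, theta_F hn (h.mulVec g), theta_F hn h,
    conj_transvection hn g h.mem_Ecol h.dotProduct_eq_zero]

end Theta

section Elementary

variable {n : ℕ} [NeZero n] {R : Type} [CommRing R] {I : Ideal R} {i j k l : Fin n} {s t : R}

/-- The elementary generator `F(eᵢ, s eⱼ)` of `St*(n, R, I)`. -/
noncomputable def fx (I : Ideal R) (i j : Fin n) (s : R) : StStar n R I :=
  F I (Pi.single i 1) (Pi.single j s)

theorem theta_fx (hn : 4 ≤ n) (hij : i ≠ j) (hs : s ∈ I) : theta hn I (fx I i j s) = x i j s := by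
  rw [fx, theta_F hn (.single hij hs), transvection_single hn (Pi.single_eq_of_ne hij _),
    row_single]

theorem fx_add (hij : i ≠ j) (hs : s ∈ I) (ht : t ∈ I) :
    fx I i j (s + t) = fx I i j s * fx I i j t := by
  rw [fx, Pi.single_add, F_add (.single hij hs) (.single hij ht), fx, fx]

theorem act_x_fx (hij : i ≠ j) (hkl : k ≠ l) (r : R) (hs : s ∈ I) :
    act (x i j r) (fx I k l s) =
      F I (Pi.single k 1 + Pi.single i (r * (Pi.single k 1 : Fin n → R) j))
        (Pi.single l s + Pi.single j (-r * (Pi.single l s : Fin n → R) i)) := by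
  rw [fx, act_F _ (.single hkl hs), contragredient_x, toMatrix_x_mulVec hij,
    toMatrix_x_mulVec hij.symm]

theorem act_x_fx_of_ne (hij : i ≠ j) (hkl : k ≠ l) (hjk : j ≠ k) (hil : i ≠ l) (r : R)
    (hs : s ∈ I) : act (x i j r) (fx I k l s) = fx I k l s := by
  rw [act_x_fx hij hkl r hs]
  simp [fx, hjk, hil]

theorem act_x_fx_right (hij : i ≠ j) (hjk : j ≠ k) (hik : i ≠ k) (r : R) (hs : s ∈ I) :
    act (x j k r) (fx I i j s) = fx I i j s * fx I i k (-r * s) := by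
  rw [act_x_fx hjk hij r hs, fx, fx,
    ← F_add (.single hij hs) (.single hik (I.mul_mem_left _ hs))]
  simp [hik.symm]

theorem act_x_fx_left (hn : 3 ≤ n) (hij : i ≠ j) (hjk : j ≠ k) (hik : i ≠ k) (r : R)
    (hs : s ∈ I) : act (x i j r) (fx I j k s) = fx I j k s * fx I i k (r * s) := by
  have hrs : r * s ∈ I := I.mul_mem_left r hs
  rw [fx, F_single_single_eq_S hn hjk hs, act_S _ (.single hjk.symm hs), contragredient_x,
    toMatrix_x_mulVec hij, toMatrix_x_mulVec hij.symm, fx, F_single_single_eq_S hn hik hrs,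
    ← S_add (.single hjk.symm hs) (.single hik.symm hrs)]
  simp [hik]

theorem conj_F_of_toMatrix_eq_tMat (hn : 3 ≤ n) {u v : Fin n → R} (h : IsAdmissible I u v)
    {g : SteinbergGroup n R} (hg : toMatrix g = tMat u v) : conj (F I u v) = act g := by
  suffices (conj (F I u v)).toMonoidHom = (act g).toMonoidHom from
    MulEquiv.ext fun y => DFunLike.congr_fun this y
  refine hom_ext_F hn fun u' v' h' => ?_
  change conj (F I u v) (F I u' v') = act g (F I u' v')
  rw [conj_F_F h h', act_F g h', hg,
    toMatrix_contragredient_of_toMatrix_eq_tMat h.dotProduct_eq_zero hg]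

theorem conj_fx (hn : 3 ≤ n) (hij : i ≠ j) (hs : s ∈ I) : conj (fx I i j s) = act (x i j s) := by
  refine conj_F_of_toMatrix_eq_tMat hn (.single hij hs) ?_
  rw [← row_single, toMatrix_row (by simp [hij])]

theorem commute_fx (hn : 3 ≤ n) (hij : i ≠ j) (hkl : k ≠ l) (hjk : j ≠ k) (hil : i ≠ l)
    (hs : s ∈ I) (ht : t ∈ I) : Commute (fx I i j s) (fx I k l t) := by
  rw [← commutatorElement_eq_one_iff_commute, commutatorElement_def, ← conj_apply,
    conj_fx hn hij hs, act_x_fx_of_ne hij hkl hjk hil s ht, mul_inv_cancel]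

theorem fx_mul_act_x_fx (hn : 3 ≤ n) (hij : i ≠ j) (hjk : j ≠ k) (hik : i ≠ k) (r : R)
    (hs : s ∈ I) (ht : t ∈ I) :
    fx I i j s * act (x i j r) (fx I j k t) =
      fx I j k t * fx I i k ((s + r) * t) * fx I i j s := by
  rw [← act_x_fx_left hn hij hjk hik _ ht, x_add, map_mul, mul_apply, ← conj_fx hn hij hs,
    conj_apply, inv_mul_cancel_right]

end Elementary

/-! ### Splitting ideals -/

section Splitting

variable {n : ℕ} [NeZero n] {R : Type} [CommRing R] {I : Ideal R}

theorem sub_section_mem {σ : R ⧸ I →+* R} (hσ : ∀ a, Ideal.Quotient.mk I (σ a) = a) (r : R) :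
    r - σ (Ideal.Quotient.mk I r) ∈ I := by
  rw [← Ideal.Quotient.mk_eq_mk_iff_sub_mem, hσ]

theorem fx_mul_act_x_fx_eq (hn : 3 ≤ n) {i j k : Fin n} (hij : i ≠ j) (hjk : j ≠ k) (hik : i ≠ k)
    {s t : R} (hs : s ∈ I) (ht : t ∈ I) (a b c : R) :
    fx I i j s * act (x i j a) (fx I j k t) =
      fx I i k ((s + a) * (t + b) - a * b) *
        act (x i k c) (fx I j k t * act (x j k b) (fx I i j s)) := by
  have hsat : (s + a) * t ∈ I := I.mul_mem_left _ ht
  have hbs : -b * s ∈ I := I.mul_mem_left _ hs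
  have hst : (s + a) * (t + b) - a * b = (s + a) * t - -b * s := by ring
  have hmem : (s + a) * t - -b * s ∈ I := I.sub_mem hsat hbs
  calc fx I i j s * act (x i j a) (fx I j k t)
      = fx I j k t * fx I i k ((s + a) * t) * fx I i j s :=
        fx_mul_act_x_fx hn hij hjk hik a hs ht
    _ = fx I j k t * (fx I i k ((s + a) * t - -b * s) * fx I i k (-b * s)) * fx I i j s := by
        rw [← fx_add hik hmem hbs, sub_add_cancel]
    _ = fx I i k ((s + a) * t - -b * s) * (fx I j k t * (fx I i j s * fx I i k (-b * s))) := by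
        rw [← mul_assoc, (commute_fx hn hjk hik hik.symm hjk ht hmem).eq,
          (commute_fx hn hij hik hij.symm hik hs hbs).eq]
        simp only [mul_assoc]
    _ = _ := by
        rw [hst, act_x_fx_right hij hjk hik b hs, map_mul, map_mul,
          act_x_fx_of_ne hik hjk hjk.symm hik c ht, act_x_fx_of_ne hik hij hik.symm hij c hs,
          act_x_fx_of_ne hik hik hik.symm hik c hbs]

/-- The action of `St(n, R/I)` on `St*(n, R, I)` through a section `σ` of `R → R/I`. -/
noncomputable def sectionAct (σ : R ⧸ I →+* R) :
    SteinbergGroup n (R ⧸ I) →* MulAut (StStar n R I) :=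
  act.comp (map σ)

theorem sectionAct_x (σ : R ⧸ I →+* R) (i j : Fin n) (a : R ⧸ I) :
    sectionAct σ (x i j a) = act (I := I) (x i j (σ a)) :=
  congrArg act (map_x σ i j a)

/-- The element of `St*(n, R, I) ⋊ St(n, R/I)` corresponding to `x i j r`: the decomposition
`r = (r - σ r̄) + σ r̄` splits `x i j r` into a part in `St(n, R, I)` and a part from `R/I`. -/
noncomputable def semidirectX (σ : R ⧸ I →+* R) (i j : Fin n) (r : R) :
    StStar n R I ⋊[sectionAct σ] SteinbergGroup n (R ⧸ I) :=
  ⟨fx I i j (r - σ (Ideal.Quotient.mk I r)), x i j (Ideal.Quotient.mk I r)⟩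

section Section

variable {σ : R ⧸ I →+* R} (hσ : ∀ a, Ideal.Quotient.mk I (σ a) = a)
include hσ

theorem semidirectX_add {i j : Fin n} (hij : i ≠ j) (r s : R) :
    semidirectX σ i j (r + s) = semidirectX σ i j r * semidirectX σ i j s := by
  ext
  · rw [SemidirectProduct.mul_left]
    simp only [semidirectX, sectionAct_x]
    rw [act_x_fx_of_ne hij hij hij.symm hij _ (sub_section_mem hσ s),
      ← fx_add hij (sub_section_mem hσ r) (sub_section_mem hσ s), map_add, map_add,
      add_sub_add_comm]
  · simp [semidirectX, x_add]

theorem commute_semidirectX (hn : 3 ≤ n) {i j k l : Fin n} (hij : i ≠ j) (hkl : k ≠ l)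
    (hjk : j ≠ k) (hil : i ≠ l) (r s : R) :
    Commute (semidirectX σ i j r) (semidirectX σ k l s) := by
  ext
  · simp only [SemidirectProduct.mul_left, semidirectX, sectionAct_x]
    rw [act_x_fx_of_ne hij hkl hjk hil _ (sub_section_mem hσ s),
      act_x_fx_of_ne hkl hij hil.symm hjk.symm _ (sub_section_mem hσ r)]
    exact (commute_fx hn hij hkl hjk hil (sub_section_mem hσ r) (sub_section_mem hσ s)).eq
  · exact (commute_x_x hjk hil _ _).eq

theorem commutator_semidirectX (hn : 3 ≤ n) {i j k : Fin n} (hij : i ≠ j) (hjk : j ≠ k)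
    (hik : i ≠ k) (r s : R) :
    ⁅semidirectX σ i j r, semidirectX σ j k s⁆ = semidirectX σ i k (r * s) := by
  suffices semidirectX σ i j r * semidirectX σ j k s =
      semidirectX σ i k (r * s) * (semidirectX σ j k s * semidirectX σ i j r) by
    rw [commutatorElement_def, this]
    group
  ext
  · simp only [SemidirectProduct.mul_left, semidirectX, sectionAct_x]
    rw [fx_mul_act_x_fx_eq hn hij hjk hik (sub_section_mem hσ r) (sub_section_mem hσ s) _
      (σ (Ideal.Quotient.mk I s)) (σ (Ideal.Quotient.mk I (r * s)))]
    simp only [sub_add_cancel, map_mul]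
  · have := commutator_x_x hij hjk hik (Ideal.Quotient.mk I r) (Ideal.Quotient.mk I s)
    simp only [SemidirectProduct.mul_right, semidirectX, map_mul, ← this, commutatorElement_def]
    group

/-- The homomorphism `St(n, R) → St*(n, R, I) ⋊ St(n, R/I)` that sends `x i j r` to
`semidirectX σ i j r`; it inverts `theta` on the first factor. -/
noncomputable def toSemidirect (hn : 3 ≤ n) :
    SteinbergGroup n R →* StStar n R I ⋊[sectionAct σ] SteinbergGroup n (R ⧸ I) :=
  SteinbergGroup.lift (semidirectX σ) (fun _ _ hij => semidirectX_add hσ hij)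
    (fun _ _ _ _ hij hkl hjk hil => commute_semidirectX hσ hn hij hkl hjk hil)
    (fun _ _ _ hij hjk hik => commutator_semidirectX hσ hn hij hjk hik)

theorem toSemidirect_x (hn : 3 ≤ n) {i j : Fin n} (hij : i ≠ j) (r : R) :
    toSemidirect hσ hn (x i j r) = semidirectX σ i j r :=
  SteinbergGroup.lift_x hij r

theorem conj_toSemidirect_inl (hn : 3 ≤ n) (g : SteinbergGroup n R) (y : StStar n R I) :
    conj (toSemidirect hσ hn g) (SemidirectProduct.inl y) = SemidirectProduct.inl (act g y) := by
  induction g using SteinbergGroup.induction_on generalizing y with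
  | one => simp
  | mul g h hg hh => rw [map_mul, map_mul, mul_apply, hh, hg, map_mul, mul_apply]
  | x i j hij r =>
    set a := σ (Ideal.Quotient.mk I r)
    have hmem : r - a ∈ I := sub_section_mem hσ r
    have hinr : conj (SemidirectProduct.inr (x i j (Ideal.Quotient.mk I r)))
        (SemidirectProduct.inl y) =
          SemidirectProduct.inl (φ := sectionAct σ) (act (x i j a) y) := by
      rw [← sectionAct_x σ, SemidirectProduct.inl_aut, conj_apply, map_inv]
    calc conj (toSemidirect hσ hn (x i j r)) (SemidirectProduct.inl y)
        = conj (SemidirectProduct.inl (fx I i j (r - a)))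
            (SemidirectProduct.inl (act (x i j a) y)) := by
          rw [toSemidirect_x hσ hn hij, semidirectX, SemidirectProduct.mk_eq_inl_mul_inr, map_mul,
            mul_apply, hinr]
      _ = SemidirectProduct.inl (conj (fx I i j (r - a)) (act (x i j a) y)) := by
          simp only [conj_apply, map_mul, map_inv]
      _ = SemidirectProduct.inl (act (x i j r) y) := by
          rw [conj_fx hn hij hmem, ← mul_apply, ← map_mul, ← x_add, sub_add_cancel]

theorem toSemidirect_row (hn : 3 ≤ n) {i : Fin n} {w : Fin n → R}
    (hw : IsAdmissible I (Pi.single i 1) w) :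
    toSemidirect hσ hn (row i w) = SemidirectProduct.inl (F I (Pi.single i 1) w) := by
  refine hw.induction_on ?_ (fun v w hv hw ihv ihw => ?_) fun j hij s hs => ?_
  · rw [row_zero, F_zero (single_mem_Ecol i), map_one, map_one]
  · rw [row_add, F_add hv hw, map_mul, map_mul, ihv, ihw]
  · rw [row_single, toSemidirect_x hσ hn hij, semidirectX, Ideal.Quotient.eq_zero_iff_mem.2 hs,
      map_zero, sub_zero, x_zero, SemidirectProduct.mk_eq_inl_mul_inr, map_one, mul_one, fx]

theorem toSemidirect_theta (hn : 4 ≤ n) (y : StStar n R I) :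
    toSemidirect hσ (Nat.le_of_succ_le hn) (theta hn I y) = SemidirectProduct.inl y := by
  suffices (toSemidirect hσ (Nat.le_of_succ_le hn)).comp (theta hn I) = SemidirectProduct.inl from
    DFunLike.congr_fun this y
  refine hom_ext_F (Nat.le_of_succ_le hn) fun u v h => ?_
  obtain ⟨g, w, hw₀, rfl, rfl⟩ :=
    exists_mulVec_contragredient_mulVec h.mem_Ecol h.dotProduct_eq_zero
  have hw : IsAdmissible I (Pi.single 0 1) w := by
    simpa only [map_inv, toMatrix_inv_mulVec_mulVec] using h.mulVec g⁻¹
  rw [MonoidHom.comp_apply, theta_F hn h, transvection_mulVec hn g hw₀, ← act_F g hw,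
    ← conj_toSemidirect_inl hσ (Nat.le_of_succ_le hn),
    ← toSemidirect_row hσ (Nat.le_of_succ_le hn) hw]
  simp only [conj_apply, map_mul, map_inv]

theorem theta_injective (hn : 4 ≤ n) : Function.Injective (theta hn I) :=
  .of_comp (f := toSemidirect hσ (Nat.le_of_succ_le hn)) <| by
    simpa only [Function.comp_def, toSemidirect_theta] using SemidirectProduct.inl_injective

theorem toSemidirect_right (hn : 3 ≤ n) (g : SteinbergGroup n R) :
    (toSemidirect hσ hn g).right = map (Ideal.Quotient.mk I) g := by
  suffices SemidirectProduct.rightHom.comp (toSemidirect hσ hn) = map (Ideal.Quotient.mk I) from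
    DFunLike.congr_fun this g
  refine SteinbergGroup.hom_ext fun i j hij r => ?_
  rw [MonoidHom.comp_apply, toSemidirect_x hσ hn hij, map_x]
  rfl

theorem theta_left_mul_map_right (hn : 4 ≤ n) (g : SteinbergGroup n R) :
    theta hn I (toSemidirect hσ (Nat.le_of_succ_le hn) g).left *
      map σ (toSemidirect hσ (Nat.le_of_succ_le hn) g).right = g := by
  let T : StStar n R I ⋊[sectionAct σ] SteinbergGroup n (R ⧸ I) →* SteinbergGroup n R :=
    SemidirectProduct.lift (theta hn I) (map σ) fun h => MonoidHom.ext fun y =>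
      theta_act hn (map σ h) y
  suffices T.comp (toSemidirect hσ (Nat.le_of_succ_le hn)) = MonoidHom.id _ from
    DFunLike.congr_fun this g
  refine SteinbergGroup.hom_ext fun i j hij r => ?_
  rw [MonoidHom.comp_apply, toSemidirect_x hσ _ hij]
  change theta hn I (fx I i j _) * map σ (x i j _) = x i j r
  rw [theta_fx hn hij (sub_section_mem hσ r), map_x, ← x_add, sub_add_cancel]

theorem range_theta (hn : 4 ≤ n) : (theta hn I).range = (map (Ideal.Quotient.mk I)).ker := by
  refine le_antisymm ?_ fun g hg => ?_
  · rintro _ ⟨y, rfl⟩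
    rw [MonoidHom.mem_ker, ← toSemidirect_right hσ (Nat.le_of_succ_le hn), toSemidirect_theta,
      SemidirectProduct.right_inl]
  · have := theta_left_mul_map_right hσ hn g
    rw [toSemidirect_right, MonoidHom.mem_ker.1 hg, map_one, mul_one] at this
    exact ⟨_, this⟩

/-- The isomorphism of `St*(n, R, I)` with `St(n, R, I)` induced by `theta`. -/
noncomputable def thetaEquiv (hn : 4 ≤ n) :
    StStar n R I ≃* (map (n := n) (Ideal.Quotient.mk I)).ker :=
  (MonoidHom.ofInjective (theta_injective hσ hn)).trans
    (MulEquiv.subgroupCongr (range_theta hσ hn))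

theorem coe_thetaEquiv (hn : 4 ≤ n) (y : StStar n R I) :
    (thetaEquiv hσ hn y : SteinbergGroup n R) = theta hn I y :=
  rfl

end Section

end Splitting

end StStar

theorem stmt14 (n : ℕ) (hn : 4 ≤ n) [NeZero n] (R : Type) [CommRing R] (I : Ideal R)
    (σ : R ⧸ I →+* R) (hσ : ∀ x, Ideal.Quotient.mk I (σ x) = x)
    (πSt : SteinbergGroup n R →* SteinbergGroup n (R ⧸ I))
    (hπ : ∀ (i j : Fin n) (hij : i ≠ j) (r : R),
      πSt (stx n R i j hij r) = stx n (R ⧸ I) i j hij (Ideal.Quotient.mk I r))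
    (φ : SteinbergGroup n R →* Matrix.GeneralLinearGroup (Fin n) R)
    (hφ : ∀ (i j : Fin n) (hij : i ≠ j) (r : R),
      (φ (stx n R i j hij r) : Matrix (Fin n) (Fin n) R) = 1 + Matrix.single i j r) :
    ∃ Θ : StStar n R I ≃* πSt.ker,
      (∀ (u v : Fin n → R) (hu : u ∈ Ecol n R) (hv : ∀ i, v i ∈ I)
        (ho : dotProduct u v = 0),
        (φ ((Θ (PresentedGroup.of (StarGen.F u v hu hv ho)) : πSt.ker) :
            SteinbergGroup n R) : Matrix (Fin n) (Fin n) R) = tMat u v) ∧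
      (∀ (u v : Fin n → R) (hu : ∀ i, u i ∈ I) (hv : v ∈ Ecol n R)
        (ho : dotProduct u v = 0),
        (φ ((Θ (PresentedGroup.of (StarGen.S u v hu hv ho)) : πSt.ker) :
            SteinbergGroup n R) : Matrix (Fin n) (Fin n) R) = tMat u v) ∧
      (∀ (i j : Fin n) (hij : i ≠ j) (s : R) (_ : s ∈ I)
        (hu : (Pi.single i 1 : Fin n → R) ∈ Ecol n R)
        (hv : ∀ k, (Pi.single j s : Fin n → R) k ∈ I)
        (ho : dotProduct (Pi.single i 1 : Fin n → R) (Pi.single j s) = 0),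
        ((Θ (PresentedGroup.of (StarGen.F (Pi.single i 1) (Pi.single j s) hu hv ho)) :
            πSt.ker) : SteinbergGroup n R) = stx n R i j hij s) := by
  obtain rfl : πSt = SteinbergGroup.map (Ideal.Quotient.mk I) :=
    SteinbergGroup.hom_ext fun i j hij r => by
      rw [SteinbergGroup.map_x, SteinbergGroup.x_of_ne hij, SteinbergGroup.x_of_ne hij, hπ]
  obtain rfl : φ = SteinbergGroup.toGL :=
    SteinbergGroup.hom_ext fun i j hij r => Units.ext <| by
      rw [SteinbergGroup.x_of_ne hij, hφ, ← SteinbergGroup.x_of_ne hij]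
      exact (SteinbergGroup.toMatrix_x hij r).symm
  refine ⟨StStar.thetaEquiv hσ hn, fun u v hu hv huv => ?_, fun u v hu hv huv => ?_,
    fun i j hij s hs hu hv huv => ?_⟩
  · rw [StStar.coe_thetaEquiv, StStar.of_F]
    exact StStar.toMatrix_theta_F hn ⟨hu, hv, huv⟩
  · rw [StStar.coe_thetaEquiv, StStar.of_S]
    exact StStar.toMatrix_theta_S hn ⟨hv, hu, (dotProduct_comm v u).trans huv⟩
  · rw [StStar.coe_thetaEquiv, StStar.of_F, ← StStar.fx, StStar.theta_fx hn hij hs,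
      SteinbergGroup.x_of_ne hij]
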